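/- arXiv:2012.05760 — 2 statements merged into one kernel-verified Lean document; each statement's English description precedes it below -/
import Mathlib

section
/- Let L : ℝ^d → ℝ be twice continuously differentiable with ∇L globally Lipschitz with constant ℓ > 0, let η ∈ (0, 1/ℓ), and define the gradient-descent map g(θ) = θ − η∇L(θ). Let θ* be a strict saddle point: ∇L(θ*) = 0 and the Hessian ∇²L(θ*) has a strictly negative eigenvalue. Then the set {θ₀ ∈ ℝ^d : lim_{k→∞} g^k(θ₀) = θ*} has Lebesgue measure zero; in particular, if the initialization θ₀ is drawn from a distribution absolutely continuous with respect to Lebesgue measure, the probability that the gradient descent iterates θ_{k+1} = g(θ_k) converge to θ* is zero. -/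
/-!
Write `A = Dg(θs) = 1 - η ∇²L(θs)`. It is symmetric, it is positive semidefinite because `η ℓ < 1`,
and it has an eigenvalue `m = 1 - η c > 1`. The proof bypasses the center-stable manifold theorem.

Choose `ρ ∈ (1, m)` outside the finite spectrum of `A` and put `q x = ⟪A x - ρ x, x⟫`. The identity
`A²(A - ρ) - ρ²(A - ρ) = (A - ρ)(A + ρ)(A - ρ)` shows that `q (A x) ≥ ρ² q x + κ ‖x‖²` for some
`κ > 0` (`quadForm_gap`). This strict gap absorbs the nonlinear error near `θs`, so
`q (g x - g y) ≥ ρ² q (x - y)` on a small ball (`exists_ball_quadForm_expand`). If the orbits of `x`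
and `y` never leave that ball, then `q` of their difference is bounded, hence `q (x - y) ≤ 0`.
Since `q` is positive on the eigendirection `v` of `m`, two trapped points never differ by a nonzero
multiple of `v`; a bounded sequence of pairwise disjoint translates along `v` then shows that the
trapped set is null (`trapped_null`).

Every orbit converging to `θs` is eventually trapped, so the basin is covered by the preimages of
the trapped set under the iterates of `g`. These are null because `η ℓ < 1` makes `g`
antilipschitz (`preimage_iterate_null`).
-/

open MeasureTheory Filter

open scoped InnerProductSpace

section Aux

variable {E : Type*} [NormedAddCommGroup E] [InnerProductSpace ℝ E] [FiniteDimensional ℝ E]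

/-! ### The quadratic form of `A - ρ` and its growth -/

/-- The quadratic form `x ↦ ⟪A x - ρ x, x⟫` of `A - ρ`. It is positive on the eigenvectors
of `A` with eigenvalue above `ρ` and negative on those with eigenvalue below `ρ`. -/
def quadForm (A : E →L[ℝ] E) (ρ : ℝ) (x : E) : ℝ := ⟪A x - ρ • x, x⟫_ℝ

lemma exists_not_eigenvalue (A : E →L[ℝ] E) {m : ℝ} (hm : 1 < m) :
    ∃ ρ, 1 < ρ ∧ ρ < m ∧ ∀ x, A x = ρ • x → x = 0 := by
  obtain ⟨ρ, hρ, hne⟩ := (Set.Ioo_infinite hm).exists_notMem_finite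
    (Module.End.finite_hasEigenvalue (A : E →ₗ[ℝ] E))
  refine ⟨ρ, hρ.1, hρ.2, fun x hx => ?_⟩
  by_contra h0
  exact hne (Module.End.hasEigenvalue_of_hasEigenvector
    (Module.End.hasEigenvector_iff.2 ⟨Module.End.mem_eigenspace_iff.2 hx, h0⟩))

/-- Along a positive semidefinite symmetric `A`, `q (A x)` exceeds `ρ² q x` by a margin that is
definite on all of `E`, including the directions that `A` does not expand: since `ρ` is not an
eigenvalue, `A - ρ` is bounded below. -/
lemma quadForm_gap (A : E →L[ℝ] E) (hsym : ∀ x y, ⟪A x, y⟫_ℝ = ⟪x, A y⟫_ℝ)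
    (hpos : ∀ x, 0 ≤ ⟪A x, x⟫_ℝ) {ρ : ℝ} (hρ : 0 < ρ) (hne : ∀ x, A x = ρ • x → x = 0) :
    ∃ κ > 0, ∀ x, ρ ^ 2 * quadForm A ρ x + κ * ‖x‖ ^ 2 ≤ quadForm A ρ (A x) := by
  have hker : LinearMap.ker ((A : E →ₗ[ℝ] E) - ρ • LinearMap.id) = ⊥ := by
    rw [LinearMap.ker_eq_bot']
    intro x hx
    exact hne x (sub_eq_zero.1 (by simpa using hx))
  obtain ⟨K, hK, hanti⟩ := LinearMap.exists_antilipschitzWith _ hker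
  have hK' : (0 : ℝ) < K := hK
  refine ⟨ρ / K ^ 2, by positivity, fun x => ?_⟩
  have h1 : ‖x‖ ≤ K * ‖A x - ρ • x‖ := by
    simpa [dist_eq_norm] using hanti.le_mul_dist x 0
  have h2 : ρ / K ^ 2 * ‖x‖ ^ 2 ≤ ρ * ‖A x - ρ • x‖ ^ 2 := by
    rw [div_mul_eq_mul_div, div_le_iff₀ (by positivity), mul_assoc]
    refine mul_le_mul_of_nonneg_left ?_ hρ.le
    calc ‖x‖ ^ 2 ≤ (K * ‖A x - ρ • x‖) ^ 2 := by gcongr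
      _ = _ := by ring
  -- With `w = A x - ρ x`, the difference `q (A x) - ρ² q x` equals `⟪A w, w⟫ + ρ ‖w‖²`.
  have key : quadForm A ρ (A x) - ρ ^ 2 * quadForm A ρ x
      = ⟪A (A x - ρ • x), A x - ρ • x⟫_ℝ + ρ * ‖A x - ρ • x‖ ^ 2 := by
    rw [← real_inner_self_eq_norm_sq]
    simp only [quadForm, map_sub, map_smul, inner_sub_left, inner_sub_right, real_inner_smul_left,
      real_inner_smul_right, hsym (A x) x, real_inner_comm x (A x)]
    ring
  linarith [hpos (A x - ρ • x)]

/-- The margin `κ ‖x - y‖²` of the linear estimate pays for the nonlinear error, which strict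
differentiability makes small relative to `‖x - y‖` uniformly in both points. -/
lemma exists_ball_quadForm_expand {g : E → E} {A : E →L[ℝ] E} {p : E}
    (hg : HasStrictFDerivAt g A p) {ρ κ : ℝ} (hκ : 0 < κ)
    (hgap : ∀ x, ρ ^ 2 * quadForm A ρ x + κ * ‖x‖ ^ 2 ≤ quadForm A ρ (A x)) :
    ∃ r > 0, ∀ x ∈ Metric.closedBall p r, ∀ y ∈ Metric.closedBall p r,
      ρ ^ 2 * quadForm A ρ (x - y) ≤ quadForm A ρ (g x - g y) := by
  set B : E →L[ℝ] E := A - ρ • ContinuousLinearMap.id ℝ E with hB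
  have hq : ∀ x, quadForm A ρ x = ⟪B x, x⟫_ℝ := fun x => by simp [quadForm, hB]
  set M : ℝ := 2 * ‖B‖ * ‖A‖ + ‖B‖ with hM
  have hM0 : 0 ≤ M := by positivity
  -- `M ε ‖u‖²` bounds the effect on `q (A u)` of an error of norm at most `ε ‖u‖`, `ε ≤ 1`.
  set ε : ℝ := min 1 (κ / (M + 1)) with hε
  have hε0 : 0 < ε := by positivity
  have hε1 : ε ≤ 1 := min_le_left _ _
  have hεM : M * ε ≤ κ := by
    have : ε * (M + 1) ≤ κ := (le_div_iff₀ (by positivity)).1 (min_le_right _ _)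
    nlinarith
  have hev := hg.isLittleO.def hε0
  rw [nhds_prod_eq, (Metric.nhds_basis_closedBall.prod_self).eventually_iff] at hev
  obtain ⟨r, hr, hball⟩ := hev
  refine ⟨r, hr, fun x hx y hy => ?_⟩
  have he : ‖g x - g y - A (x - y)‖ ≤ ε * ‖x - y‖ := hball (Set.mk_mem_prod hx hy)
  set u := x - y
  obtain ⟨e, hge⟩ : ∃ e, e = g x - g y - A u := ⟨_, rfl⟩
  rw [← hge] at he
  have hgu : g x - g y = A u + e := by rw [hge]; abel
  have hAu : ‖A u‖ ≤ ‖A‖ * ‖u‖ := A.le_opNorm u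
  have hBe : ‖B e‖ ≤ ‖B‖ * (ε * ‖u‖) := (B.le_opNorm e).trans (by gcongr)
  have hBAu : ‖B (A u)‖ ≤ ‖B‖ * (‖A‖ * ‖u‖) := (B.le_opNorm _).trans (by gcongr)
  have t1 : |⟪B (A u), e⟫_ℝ| ≤ (‖B‖ * (‖A‖ * ‖u‖)) * (ε * ‖u‖) :=
    (abs_real_inner_le_norm _ _).trans (by gcongr)
  have t2 : |⟪B e, A u⟫_ℝ| ≤ (‖B‖ * (ε * ‖u‖)) * (‖A‖ * ‖u‖) :=
    (abs_real_inner_le_norm _ _).trans (by gcongr)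
  have t3 : |⟪B e, e⟫_ℝ| ≤ (‖B‖ * (ε * ‖u‖)) * (1 * ‖u‖) :=
    (abs_real_inner_le_norm _ _).trans (by gcongr; exact he.trans (by gcongr))
  have t4 : M * ε * ‖u‖ ^ 2 ≤ κ * ‖u‖ ^ 2 := by gcongr
  have hsplit : quadForm A ρ (A u + e)
      = quadForm A ρ (A u) + ⟪B (A u), e⟫_ℝ + ⟪B e, A u⟫_ℝ + ⟪B e, e⟫_ℝ := by
    simp only [hq, map_add, inner_add_left, inner_add_right]; ring
  have hsum : (‖B‖ * (‖A‖ * ‖u‖)) * (ε * ‖u‖) + (‖B‖ * (ε * ‖u‖)) * (‖A‖ * ‖u‖)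
      + (‖B‖ * (ε * ‖u‖)) * (1 * ‖u‖) = M * ε * ‖u‖ ^ 2 := by rw [hM]; ring
  rw [hgu, hsplit]
  linarith [hgap u, neg_le_of_abs_le t1, neg_le_of_abs_le t2, neg_le_of_abs_le t3]

/-- Geometric growth of `q` along pairs of orbits is incompatible with both orbits staying in the
ball unless the initial difference lies outside the positive cone of `q`. -/
lemma quadForm_nonpos_of_trapped {g : E → E} {A : E →L[ℝ] E} {p : E} {ρ r : ℝ} (hρ : 1 < ρ)
    (hexp : ∀ x ∈ Metric.closedBall p r, ∀ y ∈ Metric.closedBall p r,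
      ρ ^ 2 * quadForm A ρ (x - y) ≤ quadForm A ρ (g x - g y))
    {x y : E} (hx : ∀ k, g^[k] x ∈ Metric.closedBall p r)
    (hy : ∀ k, g^[k] y ∈ Metric.closedBall p r) : quadForm A ρ (x - y) ≤ 0 := by
  by_contra! hpos
  have hgrow : ∀ k, (ρ ^ 2) ^ k * quadForm A ρ (x - y) ≤ quadForm A ρ (g^[k] x - g^[k] y) := by
    intro k
    induction k with
    | zero => simp
    | succ k ih =>
      rw [Function.iterate_succ_apply', Function.iterate_succ_apply']
      calc (ρ ^ 2) ^ (k + 1) * quadForm A ρ (x - y)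
          = ρ ^ 2 * ((ρ ^ 2) ^ k * quadForm A ρ (x - y)) := by ring
        _ ≤ ρ ^ 2 * quadForm A ρ (g^[k] x - g^[k] y) := by gcongr
        _ ≤ _ := hexp _ (hx k) _ (hy k)
  set B : E →L[ℝ] E := A - ρ • ContinuousLinearMap.id ℝ E with hB
  have hbd : ∀ k, quadForm A ρ (g^[k] x - g^[k] y) ≤ ‖B‖ * (r + r) * (r + r) := by
    intro k
    have hd : ‖g^[k] x - g^[k] y‖ ≤ r + r := by
      rw [← dist_eq_norm]
      exact (dist_triangle_right _ _ p).trans (add_le_add (hx k) (hy k))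
    have hr : 0 ≤ r + r := (norm_nonneg _).trans hd
    have hq : quadForm A ρ (g^[k] x - g^[k] y)
        = ⟪B (g^[k] x - g^[k] y), g^[k] x - g^[k] y⟫_ℝ := by simp [quadForm, hB]
    rw [hq]
    refine (real_inner_le_norm _ _).trans ?_
    gcongr
    exact (B.le_opNorm _).trans (by gcongr)
  obtain ⟨k, hk⟩ := pow_unbounded_of_one_lt
    (‖B‖ * (r + r) * (r + r) / quadForm A ρ (x - y)) (show 1 < ρ ^ 2 by nlinarith)
  rw [div_lt_iff₀ hpos] at hk
  linarith [hgrow k, hbd k]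

/-! ### The Hessian as the derivative of the gradient -/

lemma gradient_contDiff {L : E → ℝ} (hL : ContDiff ℝ 2 L) : ContDiff ℝ 1 (gradient L) :=
  (InnerProductSpace.toDual ℝ E).symm.contDiff.comp
    (hL.fderiv_right (m := 1) (by norm_num))

lemma inner_fderiv_gradient {L : E → ℝ} (hL : ContDiff ℝ 2 L) (p x y : E) :
    ⟪fderiv ℝ (gradient L) p x, y⟫_ℝ = fderiv ℝ (fderiv ℝ L) p x y := by
  have hd : DifferentiableAt ℝ (fderiv ℝ L) p :=
    (hL.fderiv_right (m := 1) (by norm_num)).differentiable (by norm_num) p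
  have h := ((InnerProductSpace.toDual ℝ E).symm.toContinuousLinearEquiv.toContinuousLinearMap
    |>.hasFDerivAt.comp p hd.hasFDerivAt).fderiv
  have h' : fderiv ℝ (gradient L) p x
      = (InnerProductSpace.toDual ℝ E).symm (fderiv ℝ (fderiv ℝ L) p x) :=
    congrArg (fun T : E →L[ℝ] E => T x) h
  rw [h', InnerProductSpace.toDual_symm_apply]

lemma inner_fderiv_gradient_symm {L : E → ℝ} (hL : ContDiff ℝ 2 L) (p x y : E) :
    ⟪fderiv ℝ (gradient L) p x, y⟫_ℝ = ⟪x, fderiv ℝ (gradient L) p y⟫_ℝ := by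
  rw [real_inner_comm _ x, inner_fderiv_gradient hL, inner_fderiv_gradient hL]
  exact (hL.contDiffAt.isSymmSndFDerivAt (by simp)).eq x y

/-! ### Null sets -/

variable [MeasurableSpace E] [BorelSpace E]

/-- A measurable set meeting each line parallel to `v` in at most one point is null. -/
lemma null_of_no_translate (μ : Measure E) [μ.IsAddHaarMeasure] {s : Set E}
    (hs : MeasurableSet s) (v : E) (h : ∀ x ∈ s, ∀ y ∈ s, ∀ t : ℝ, x - y = t • v → t = 0) :
    μ s = 0 := by
  refine Measure.addHaar_eq_zero_of_disjoint_translates μ (fun n : ℕ => (1 / 2 : ℝ) ^ n • v)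
    ?_ ?_ hs
  · refine (Metric.isBounded_closedBall (x := (0 : E)) (r := ‖v‖)).subset ?_
    rintro _ ⟨n, rfl⟩
    have h1 : |(1 / 2 : ℝ) ^ n| ≤ 1 := by
      rw [abs_of_nonneg (by positivity)]
      exact pow_le_one₀ (by norm_num) (by norm_num)
    simpa [norm_smul] using mul_le_mul_of_nonneg_right h1 (norm_nonneg v)
  · intro a b hab
    refine Set.disjoint_left.2 fun z hza hzb => hab ?_
    simp only [Set.singleton_add, Set.mem_image] at hza hzb
    obtain ⟨x, hx, hxz⟩ := hza
    obtain ⟨y, hy, hyz⟩ := hzb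
    have hxy : x - y = ((1 / 2 : ℝ) ^ b - (1 / 2 : ℝ) ^ a) • v := by
      rw [sub_smul, sub_eq_sub_iff_add_eq_add, add_comm x, add_comm _ y, hxz, add_comm y, hyz]
    have := sub_eq_zero.1 (h x hx y hy _ hxy)
    exact (pow_right_injective₀ (by norm_num : (0 : ℝ) < 1 / 2) (by norm_num) this).symm

lemma trapped_null (μ : Measure E) [μ.IsAddHaarMeasure] {g : E → E} (hgc : Continuous g)
    {A : E →L[ℝ] E} {p : E} (hg : HasStrictFDerivAt g A p)
    (hsym : ∀ x y, ⟪A x, y⟫_ℝ = ⟪x, A y⟫_ℝ) (hpos : ∀ x, 0 ≤ ⟪A x, x⟫_ℝ)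
    {v : E} {m : ℝ} (hv : v ≠ 0) (hm : 1 < m) (hAv : A v = m • v) :
    ∃ r > 0, μ {x | ∀ k, g^[k] x ∈ Metric.closedBall p r} = 0 := by
  obtain ⟨ρ, hρ1, hρm, hne⟩ := exists_not_eigenvalue A hm
  obtain ⟨κ, hκ, hgap⟩ := quadForm_gap A hsym hpos (by linarith) hne
  obtain ⟨r, hr, hexp⟩ := exists_ball_quadForm_expand hg hκ hgap
  refine ⟨r, hr, null_of_no_translate μ ?_ v fun x hx y hy t ht => ?_⟩
  · rw [Set.ofPred_forall]
    exact (isClosed_iInter fun k =>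
      Metric.isClosed_closedBall.preimage (hgc.iterate k)).measurableSet
  · have hle := quadForm_nonpos_of_trapped hρ1 hexp hx hy
    have hval : quadForm A ρ (t • v) = t ^ 2 * ((m - ρ) * ‖v‖ ^ 2) := by
      rw [← real_inner_self_eq_norm_sq]
      simp only [quadForm, map_smul, hAv, inner_sub_left, real_inner_smul_left,
        real_inner_smul_right]
      ring
    rw [ht, hval] at hle
    have hc : 0 < (m - ρ) * ‖v‖ ^ 2 := by
      have := norm_pos_iff.2 hv
      have := sub_pos.2 hρm
      positivity
    by_contra h0
    have := mul_pos (pow_pos (abs_pos.2 h0) 2) hc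
    rw [sq_abs] at this
    linarith

/-- An antilipschitz map pulls null sets back to null sets: this holds for Hausdorff measure of
the top dimension, which has the same null sets as any other Haar measure. -/
lemma preimage_null (μ : Measure E) [μ.IsAddHaarMeasure] {g : E → E} {K : NNReal}
    (hg : AntilipschitzWith K g) {s : Set E} (hs : μ s = 0) : μ (g ⁻¹' s) = 0 := by
  have h1 : (Measure.hausdorffMeasure (Module.finrank ℝ E : ℝ) : Measure E) s = 0 :=
    Measure.absolutelyContinuous_isAddHaarMeasure _ μ hs
  refine Measure.absolutelyContinuous_isAddHaarMeasure μ
    (Measure.hausdorffMeasure (Module.finrank ℝ E : ℝ)) ?_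
  have h2 := hg.hausdorffMeasure_preimage_le (Nat.cast_nonneg (Module.finrank ℝ E)) s
  rw [h1, mul_zero] at h2
  exact le_antisymm h2 (zero_le)

lemma preimage_iterate_null (μ : Measure E) [μ.IsAddHaarMeasure] {g : E → E} {K : NNReal}
    (hg : AntilipschitzWith K g) {s : Set E} (hs : μ s = 0) (n : ℕ) : μ (g^[n] ⁻¹' s) = 0 := by
  induction n with
  | zero => simpa using hs
  | succ n ih =>
    rw [Function.iterate_succ, Set.preimage_comp]
    exact preimage_null μ hg ih

lemma basin_null (μ : Measure E) [μ.IsAddHaarMeasure] {g : E → E} {K : NNReal}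
    (hg : AntilipschitzWith K g) {p : E} {r : ℝ} (hr : 0 < r)
    (hW : μ {x | ∀ k, g^[k] x ∈ Metric.closedBall p r} = 0) :
    μ {x | Tendsto (fun k => g^[k] x) atTop (nhds p)} = 0 := by
  refine measure_mono_null (t := ⋃ n : ℕ, g^[n] ⁻¹' {x | ∀ k, g^[k] x ∈ Metric.closedBall p r})
    (fun x hx => ?_) (measure_iUnion_null fun n => preimage_iterate_null μ hg hW n)
  obtain ⟨N, hN⟩ := eventually_atTop.1 (hx.eventually (Metric.closedBall_mem_nhds p hr))
  refine Set.mem_iUnion.2 ⟨N, fun k => ?_⟩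
  rw [← Function.iterate_add_apply]
  exact hN _ (Nat.le_add_left N k)

end Aux

/-! ### Gradient descent -/

/-- Theorem (Lee et al.): gradient descent with step size `η ∈ (0, 1/ℓ)` on a `C²`
function with `ℓ`-Lipschitz gradient almost surely avoids any strict saddle point `θ*`:
the set of initializations converging to `θ*` has Lebesgue measure zero, and hence
under any absolutely continuous initialization the convergence probability is zero. -/
theorem gd_avoids_strict_saddles
    (d : ℕ) (L : EuclideanSpace ℝ (Fin d) → ℝ) (hL : ContDiff ℝ 2 L)
    (ℓip : ℝ) (hℓip : 0 < ℓip)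
    (hlip : ∀ θ₁ θ₂ : EuclideanSpace ℝ (Fin d),
      ‖gradient L θ₁ - gradient L θ₂‖ ≤ ℓip * ‖θ₁ - θ₂‖)
    (η : ℝ) (hη : 0 < η) (hη' : η < 1 / ℓip)
    (g : EuclideanSpace ℝ (Fin d) → EuclideanSpace ℝ (Fin d))
    (hg : ∀ θ, g θ = θ - η • gradient L θ)
    (θs : EuclideanSpace ℝ (Fin d))
    (hcrit : gradient L θs = 0)
    (hsaddle : ∃ (v : EuclideanSpace ℝ (Fin d)) (c : ℝ), v ≠ 0 ∧ c < 0 ∧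
      fderiv ℝ (gradient L) θs v = c • v) :
    volume {θ₀ : EuclideanSpace ℝ (Fin d) |
        Tendsto (fun k => g^[k] θ₀) atTop (nhds θs)} = 0 ∧
    ∀ μ : Measure (EuclideanSpace ℝ (Fin d)), IsProbabilityMeasure μ → μ ≪ volume →
      μ {θ₀ : EuclideanSpace ℝ (Fin d) |
        Tendsto (fun k => g^[k] θ₀) atTop (nhds θs)} = 0 := by
  have hηℓ : η * ℓip < 1 := (lt_div_iff₀ hℓip).1 hη'
  have hgfun : g = fun θ => θ - η • gradient L θ := funext hg
  set H := fderiv ℝ (gradient L) θs with hH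
  have hHs : HasStrictFDerivAt (gradient L) H θs :=
    (gradient_contDiff hL).contDiffAt.hasStrictFDerivAt (by norm_num)
  have hgs : HasStrictFDerivAt g (ContinuousLinearMap.id ℝ _ - η • H) θs := by
    rw [hgfun]
    exact (hasStrictFDerivAt_id θs).sub (hHs.const_smul η)
  have hgc : Continuous g := by
    rw [hgfun]
    exact continuous_id.sub ((gradient_contDiff hL).continuous.const_smul η)
  have hHnorm : ‖H‖ ≤ ℓip :=
    hHs.hasFDerivAt.le_of_lip' hℓip.le (Eventually.of_forall fun x => hlip x θs)
  obtain ⟨v, c, hv, hc, hHv⟩ := hsaddle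
  obtain ⟨r, hr, hW⟩ := trapped_null volume hgc hgs
    (fun x y => by
      simp [inner_sub_left, inner_sub_right, real_inner_smul_left, real_inner_smul_right, hH,
        inner_fderiv_gradient_symm hL])
    (fun x => by
      have h1 : ⟪H x, x⟫_ℝ ≤ ℓip * ‖x‖ * ‖x‖ :=
        (real_inner_le_norm _ _).trans (by gcongr; exact H.le_of_opNorm_le hHnorm x)
      have h2 : η * ⟪H x, x⟫_ℝ ≤ η * (ℓip * ‖x‖ * ‖x‖) := by gcongr
      have h3 : η * ℓip * ‖x‖ ^ 2 ≤ 1 * ‖x‖ ^ 2 := by gcongr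
      simp only [_root_.sub_apply, ContinuousLinearMap.id_apply,
        _root_.smul_apply, inner_sub_left, real_inner_smul_left,
        real_inner_self_eq_norm_sq]
      linarith)
    (m := 1 - η * c) hv (by nlinarith)
    (by simp [hHv, sub_smul, mul_smul])
  -- `‖x - y‖ ≤ ‖g x - g y‖ + η ℓ ‖x - y‖`, hence the constant `(1 - η ℓ)⁻¹`.
  have hanti : AntilipschitzWith (Real.toNNReal (1 - η * ℓip)⁻¹) g := by
    refine AntilipschitzWith.of_le_mul_dist fun x y => ?_
    rw [Real.coe_toNNReal _ (inv_nonneg.2 (by linarith)), inv_mul_eq_div,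
      le_div_iff₀ (by linarith), dist_eq_norm, dist_eq_norm]
    have h1 : ‖x - y‖ ≤ ‖g x - g y‖ + ‖η • (gradient L x - gradient L y)‖ := by
      have : x - y = (g x - g y) + η • (gradient L x - gradient L y) := by
        rw [hg, hg, smul_sub]; abel
      rw [this]
      exact norm_add_le _ _
    rw [norm_smul, Real.norm_of_nonneg hη.le] at h1
    have h2 : η * ‖gradient L x - gradient L y‖ ≤ η * (ℓip * ‖x - y‖) := by
      gcongr
      exact hlip x y
    linarith
  have hnull := basin_null volume hanti hr hW
  exact ⟨hnull, fun μ _ hμ => hμ hnull⟩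
end

section
/- Let f_θ(x) = W_L φ(W_{L−1} ⋯ φ(W_1 x)) be an L-layer scalar-output ReLU network, let D be a data distribution over pairs (x, y) with ‖x‖₂ ≤ B and y ∈ {−1, 1}, and let n = max_l n_l be the maximal layer width. Define the 0/1 risk R(f) = E_{(x,y)∼D} [y·f(x) < 0], the empirical γ-margin risk R̂_{γ,m}(f) = (1/m)Σᵢ [yᵢ·f(xᵢ) < γ] over a sample S_m, and the spectral complexity R(θ) = (∏_{l=1}^L ‖W_l‖₂)·sqrt(Σ_{l=1}^L ‖W_l‖_F²/‖W_l‖₂²). Then for any γ > 0 and δ ∈ (0,1), with probability at least 1−δ over S_m ∼ D^m, simultaneously for all weight settings θ̂: R(f_θ̂) ≤ R̂_{γ,m}(f_θ̂) + sqrt( ( log(8Lm/δ) + (1/(2L))·log m + 8e⁴·(B·R(θ̂)/γ)²·L²·n·log(2Ln) ) / (2m−1) ). -/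
/-! The bound is a PAC-Bayes argument with Gaussian priors, carried out without posterior
distributions.

For a fixed prior `P` on weights, Hoeffding's inequality makes the gap between the risk and the
empirical risk of a fixed classifier sub-Gaussian with variance proxy `1 / (4 m)`, so that
`exp ((2 m - 1) gap²)` has mean at most `2 m` (`lintegral_exp_gap_sq_le`). By Fubini and Markov,
outside an event of probability `η`, any set of weights of `P`-mass `c` on which the gap is at least
`g` satisfies `(2 m - 1) g² ≤ log (2 m / (η c))` (`pacBayes`).

By positive homogeneity a network with weights `W` is `Π = ∏ ‖W l‖` times the network with normalised
layers `U l = W l / ‖W l‖`. Put `A = B Π / γ`. If `A < 1`, every sample has margin below `γ` and there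
is nothing to prove. Otherwise let `a ≥ A`. If each layer of `V` is within `r = 1 / (3 a L)` of `U` in
spectral norm, the outputs of `V` and `U` differ by at most `B / (2 a) ≤ γ / (2 Π)`
(`norm_reluNet_sub_le`, `one_add_pow_sub_one_le`). Hence the gap of the event that `V` has margin
below `B / (2 a)` dominates the risk minus the `γ`-margin empirical risk of `W` (`sub_le_gap`).

The Gaussian prior with entry variance `r² / (24 n)` gives each such spectral ball mass at least
`exp (-12 n ‖U l‖_F² / r²) / 2` (`gaussMat_smallBall`): a centred ball has mass at least `1 / 2` by
a spectral norm tail bound (`gaussMat_specNorm_tail`), and moving a symmetric set away from the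
origin costs only the Cameron–Martin factor (`gaussMat_shift`).

The radius depends on the weights through `A`, so `a` is restricted to the values `k / 4` with `k` a
natural number, and scale `k` is given failure probability `δ / 2 ^ (k + 1)`. Taking
`k = ⌈4 A⌉` costs a term linear in `A`, which is absorbed by `8 e⁴ A² L² n log (2 L n)`. -/


open MeasureTheory
open scoped Classical

/-- ReLU network forward pass: `reluNet d W x k` is
`W_{k-1} φ(W_{k-2} ⋯ φ(W_0 x))` with `φ(z) = max(z,0)` entrywise. -/
noncomputable def reluNet (d : ℕ → ℕ)
    (W : (l : ℕ) → Matrix (Fin (d (l + 1))) (Fin (d l)) ℝ)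
    (x : Fin (d 0) → ℝ) : (k : ℕ) → Fin (d k) → ℝ
  | 0 => x
  | (k + 1) => (W k).mulVec
      (if k = 0 then reluNet d W x k else fun j => max (reluNet d W x k j) 0)

/-- The spectral (ℓ₂ operator) norm of a matrix. -/
noncomputable def specNorm {p q : ℕ} (A : Matrix (Fin p) (Fin q) ℝ) : ℝ :=
  ‖LinearMap.toContinuousLinearMap (Matrix.toEuclideanLin A)‖

/-- The spectral complexity `R(θ) = (∏_l ‖W_l‖₂)·√(Σ_l ‖W_l‖_F²/‖W_l‖₂²)`. -/
noncomputable def spectralComplexity (L : ℕ) (d : ℕ → ℕ)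
    (W : (l : ℕ) → Matrix (Fin (d (l + 1))) (Fin (d l)) ℝ) : ℝ :=
  (∏ l ∈ Finset.range L, specNorm (W l)) *
    Real.sqrt (∑ l ∈ Finset.range L, (∑ i, ∑ j, (W l i j) ^ 2) / (specNorm (W l)) ^ 2)

/-! ### Gaussian integrals and the Cameron–Martin shift -/

lemma lintegral_pi_prod {ι : Type*} [Fintype ι] {X : ι → Type*} [∀ i, MeasurableSpace (X i)]
    (μ : ∀ i, Measure (X i)) [∀ i, IsProbabilityMeasure (μ i)]
    (f : ∀ i, X i → ENNReal) (hf : ∀ i, Measurable (f i)) :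
    ∫⁻ x, ∏ i, f i (x i) ∂(Measure.pi μ) = ∏ i, ∫⁻ y, f i y ∂(μ i) := by
  have h := ProbabilityTheory.lintegral_prod_eq_prod_lintegral_of_indepFun (μ := Measure.pi μ)
    Finset.univ (fun i x => f i (x i))
    (ProbabilityTheory.iIndepFun_pi fun i => (hf i).aemeasurable)
    (fun i => (hf i).comp (measurable_pi_apply i))
  rw [h]
  refine Finset.prod_congr rfl fun i _ => ?_
  exact (measurePreserving_eval μ i).lintegral_comp (hf i)

lemma pi_withDensity_eq {ι : Type*} [Fintype ι] {X : ι → Type*} [∀ i, MeasurableSpace (X i)]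
    (μ : ∀ i, Measure (X i)) [∀ i, IsProbabilityMeasure (μ i)]
    (f : ∀ i, X i → ENNReal) (hf : ∀ i, Measurable (f i))
    [∀ i, IsProbabilityMeasure ((μ i).withDensity (f i))] :
    Measure.pi (fun i => (μ i).withDensity (f i)) =
      (Measure.pi μ).withDensity (fun x => ∏ i, f i (x i)) := by
  refine Measure.pi_eq fun s hs => ?_
  rw [withDensity_apply _ (MeasurableSet.univ_pi hs),
    ← lintegral_indicator (MeasurableSet.univ_pi hs)]
  have h : ∀ x, (Set.univ.pi s).indicator (fun x => ∏ i, f i (x i)) x =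
      ∏ i, (s i).indicator (f i) (x i) := by
    intro x
    by_cases hx : x ∈ Set.univ.pi s
    · rw [Set.indicator_of_mem hx]
      exact Finset.prod_congr rfl fun i _ => by
        rw [Set.indicator_of_mem (hx i (Set.mem_univ i))]
    · rw [Set.indicator_of_notMem hx]
      simp only [Set.mem_pi, Set.mem_univ, true_imp_iff, not_forall] at hx
      obtain ⟨i, hi⟩ := hx
      exact (Finset.prod_eq_zero (Finset.mem_univ i) (Set.indicator_of_notMem hi _)).symm
  simp_rw [h]
  rw [lintegral_pi_prod μ _ fun i => (hf i).indicator (hs i)]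
  refine Finset.prod_congr rfl fun i _ => ?_
  rw [withDensity_apply _ (hs i), lintegral_indicator (hs i)]

lemma lintegral_exp_mul_gaussian (s : ℝ) :
    ∫⁻ z, ENNReal.ofReal (Real.exp (s * z)) ∂(ProbabilityTheory.gaussianReal 0 1)
      = ENNReal.ofReal (Real.exp (s ^ 2 / 2)) := by
  rw [← ofReal_integral_eq_lintegral_ofReal
    (ProbabilityTheory.integrable_exp_mul_gaussianReal s) (by filter_upwards with x; positivity)]
  have := congrFun (ProbabilityTheory.mgf_id_gaussianReal (μ := 0) (v := 1)) s
  simp only [ProbabilityTheory.mgf, id] at this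
  rw [this]; simp

lemma lintegral_exp_sq_gaussian {c : ℝ} (hc : c < 1 / 2) :
    ∫⁻ z, ENNReal.ofReal (Real.exp (c * z ^ 2)) ∂(ProbabilityTheory.gaussianReal 0 1)
      = ENNReal.ofReal (1 / Real.sqrt (1 - 2 * c)) := by
  rw [ProbabilityTheory.gaussianReal_of_var_ne_zero _ one_ne_zero,
    lintegral_withDensity_eq_lintegral_mul _ (ProbabilityTheory.measurable_gaussianPDF 0 1)
      (by fun_prop)]
  have h1 : ∀ z : ℝ, (ProbabilityTheory.gaussianPDF 0 1 *
      fun z : ℝ => ENNReal.ofReal (Real.exp (c * z ^ 2))) z =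
      ENNReal.ofReal ((Real.sqrt (2 * Real.pi))⁻¹ * Real.exp (-(1 / 2 - c) * z ^ 2)) := by
    intro z
    simp only [Pi.mul_apply, ProbabilityTheory.gaussianPDF, ProbabilityTheory.gaussianPDFReal]
    rw [← ENNReal.ofReal_mul (by positivity), mul_assoc, ← Real.exp_add]
    congr 3
    · simp
    · simp; ring
  simp_rw [h1]
  rw [← ofReal_integral_eq_lintegral_ofReal
    ((integrable_exp_neg_mul_sq (by linarith)).const_mul _) (by filter_upwards with x; positivity),
    integral_const_mul, integral_gaussian]
  congr 1
  rw [← Real.sqrt_inv, ← Real.sqrt_mul (by positivity), ← Real.sqrt_one, ← Real.sqrt_div zero_le_one]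
  congr 1
  have h2 : 1 / 2 - c ≠ 0 := by linarith
  have h3 : 1 - 2 * c ≠ 0 := by linarith
  have := Real.pi_pos.ne'
  rw [Real.sqrt_one]
  rw [show 1 / 2 - c = (1 - 2 * c) / 2 by ring]
  field_simp

/-- Sub-Gaussian variables have exponential square moments. The square is linearised through
`exp (l y²) = E exp (√(2l) y z)` for a standard Gaussian `z`, and the two integrals are exchanged. -/
lemma lintegral_exp_sq_le {Ω : Type*} [MeasurableSpace Ω] (P : Measure Ω) [SFinite P]
    {Y : Ω → ℝ} (hY : Measurable Y) {τ l : ℝ} (hl : 0 ≤ l) (hlt : 2 * l * τ < 1)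
    (h : ∀ t : ℝ, ∫⁻ ω, ENNReal.ofReal (Real.exp (t * Y ω)) ∂P ≤
      ENNReal.ofReal (Real.exp (t ^ 2 * τ / 2))) :
    ∫⁻ ω, ENNReal.ofReal (Real.exp (l * Y ω ^ 2)) ∂P ≤
      ENNReal.ofReal (1 / Real.sqrt (1 - 2 * (l * τ))) := by
  have hs : Real.sqrt (2 * l) ^ 2 = 2 * l := Real.sq_sqrt (by positivity)
  calc ∫⁻ ω, ENNReal.ofReal (Real.exp (l * Y ω ^ 2)) ∂P
      = ∫⁻ ω, ∫⁻ z, ENNReal.ofReal (Real.exp (Real.sqrt (2 * l) * Y ω * z))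
          ∂(ProbabilityTheory.gaussianReal 0 1) ∂P := by
        refine lintegral_congr fun ω => ?_
        rw [lintegral_exp_mul_gaussian, mul_pow, hs]
        congr 2; ring
    _ = ∫⁻ z, ∫⁻ ω, ENNReal.ofReal (Real.exp (Real.sqrt (2 * l) * Y ω * z))
          ∂P ∂(ProbabilityTheory.gaussianReal 0 1) :=
        lintegral_lintegral_swap (by fun_prop)
    _ ≤ ∫⁻ z, ENNReal.ofReal (Real.exp ((l * τ) * z ^ 2))
          ∂(ProbabilityTheory.gaussianReal 0 1) := by
        refine lintegral_mono fun z => ?_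
        have := h (Real.sqrt (2 * l) * z)
        rw [mul_pow, hs] at this
        convert this using 5 <;> ring
    _ = _ := lintegral_exp_sq_gaussian (by linarith)

open ProbabilityTheory in
lemma gaussianReal_eq_withDensity (w : ℝ) {v : NNReal} (hv : v ≠ 0) :
    gaussianReal w v = (gaussianReal 0 v).withDensity
      (fun x => ENNReal.ofReal (Real.exp (w * x / v - w ^ 2 / (2 * v)))) := by
  rw [gaussianReal_of_var_ne_zero _ hv, gaussianReal_of_var_ne_zero _ hv,
    ← withDensity_mul _ (measurable_gaussianPDF 0 v) (by fun_prop)]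
  congr 1
  ext x
  have hv' : (v : ℝ) ≠ 0 := by exact_mod_cast hv
  simp only [Pi.mul_apply, gaussianPDF, gaussianPDFReal]
  rw [← ENNReal.ofReal_mul (by positivity), mul_assoc _ (Real.exp _), ← Real.exp_add]
  congr 3
  field_simp
  ring

open ProbabilityTheory in
/-- The law of a `p × q` matrix with independent centred Gaussian entries of variance `v`. -/
noncomputable def gaussMat (p q : ℕ) (v : NNReal) : Measure (Fin p → Fin q → ℝ) :=
  Measure.pi fun _ => Measure.pi fun _ => gaussianReal 0 v

instance (p q : ℕ) (v : NNReal) : IsProbabilityMeasure (gaussMat p q v) := by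
  unfold gaussMat; infer_instance

open ProbabilityTheory in
/-- Cameron–Martin: density of a shifted Gaussian matrix with respect to the unshifted one. -/
lemma gaussMat_map_add {p q : ℕ} {v : NNReal} (hv : v ≠ 0) (W : Fin p → Fin q → ℝ) :
    (gaussMat p q v).map (fun V => V + W) = (gaussMat p q v).withDensity
      (fun V => ENNReal.ofReal (Real.exp ((∑ i, ∑ j, W i j * V i j) / v
        - (∑ i, ∑ j, W i j ^ 2) / (2 * v)))) := by
  have e1 : ∀ w : Fin q → ℝ, (Measure.pi fun j => gaussianReal (w j) v) =
      (Measure.pi fun _ : Fin q => gaussianReal 0 v).withDensity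
      (fun x => ∏ j, ENNReal.ofReal (Real.exp (w j * x j / v - w j ^ 2 / (2 * v)))) := by
    intro w
    have : ∀ j, IsProbabilityMeasure ((gaussianReal 0 v).withDensity
      (fun x => ENNReal.ofReal (Real.exp (w j * x / v - w j ^ 2 / (2 * v))))) := by
      intro j; rw [← gaussianReal_eq_withDensity _ hv]; infer_instance
    rw [← pi_withDensity_eq (fun _ : Fin q => gaussianReal 0 v)
      (fun j x => ENNReal.ofReal (Real.exp (w j * x / v - w j ^ 2 / (2 * v))))
      (fun j => by fun_prop)]
    simp_rw [← gaussianReal_eq_withDensity _ hv]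
  have e2 : (gaussMat p q v).map (fun V => V + W) =
      Measure.pi fun i => Measure.pi fun j => gaussianReal (W i j) v := by
    have h1 : ∀ w : Fin q → ℝ, (Measure.pi fun _ : Fin q => gaussianReal 0 v).map (fun x => x + w)
        = Measure.pi fun j => gaussianReal (w j) v := by
      intro w
      have : (fun x : Fin q → ℝ => x + w) = fun x j => x j + w j := rfl
      rw [this, Measure.pi_map_pi (f := fun j (y : ℝ) => y + w j) (fun j => by fun_prop)]
      simp_rw [gaussianReal_map_add_const, zero_add]
    have : (fun V : Fin p → Fin q → ℝ => V + W) = fun V i => V i + W i := rfl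
    rw [this, gaussMat, Measure.pi_map_pi (f := fun i (y : Fin q → ℝ) => y + W i)
      (fun j => by fun_prop)]
    simp_rw [h1]
  rw [e2, show (fun i => Measure.pi fun j => gaussianReal (W i j) v) = _ from
    funext fun i => e1 (W i)]
  have : ∀ i, IsProbabilityMeasure ((Measure.pi fun _ : Fin q => gaussianReal 0 v).withDensity
      (fun x => ∏ j, ENNReal.ofReal (Real.exp (W i j * x j / v - W i j ^ 2 / (2 * v))))) := by
    intro i; rw [← e1]; infer_instance
  rw [pi_withDensity_eq (fun _ : Fin p => Measure.pi fun _ : Fin q => gaussianReal 0 v)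
      (fun i x => ∏ j, ENNReal.ofReal (Real.exp (W i j * x j / v - W i j ^ 2 / (2 * v))))
      (fun i => by fun_prop)]
  congr 1
  ext V
  rw [Finset.sum_div, Finset.sum_div, ← Finset.sum_sub_distrib, Real.exp_sum,
    ENNReal.ofReal_prod_of_nonneg (fun _ _ => by positivity)]
  refine Finset.prod_congr rfl fun i _ => ?_
  rw [Finset.sum_div, Finset.sum_div, ← Finset.sum_sub_distrib, Real.exp_sum,
    ENNReal.ofReal_prod_of_nonneg (fun _ _ => by positivity)]

open ProbabilityTheory in
lemma gaussMat_map_neg (p q : ℕ) (v : NNReal) :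
    (gaussMat p q v).map (fun V => -V) = gaussMat p q v := by
  have h1 : (Measure.pi fun _ : Fin q => gaussianReal 0 v).map (fun x => -x)
      = Measure.pi fun _ => gaussianReal 0 v := by
    have : (fun x : Fin q → ℝ => -x) = fun x j => -x j := rfl
    rw [this, Measure.pi_map_pi (fun j => by fun_prop)]
    simp_rw [gaussianReal_map_neg, neg_zero]
  have : (fun V : Fin p → Fin q → ℝ => -V) = fun V i => -V i := rfl
  rw [this, gaussMat, Measure.pi_map_pi (fun j => by fun_prop)]
  simp_rw [h1]

/-- For a symmetric set `U`, shifting by `W` costs at most the factor `exp (-‖W‖_F² / (2 v))`: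
symmetrising the Cameron–Martin density over `V ↦ -V` replaces its linear term by `cosh ≥ 1`. -/
lemma gaussMat_shift {p q : ℕ} {v : NNReal} (hv : v ≠ 0) (W : Fin p → Fin q → ℝ)
    {U : Set (Fin p → Fin q → ℝ)} (hU : MeasurableSet U) (hneg : ∀ V, V ∈ U → -V ∈ U) :
    ENNReal.ofReal (Real.exp (-(∑ i, ∑ j, W i j ^ 2) / (2 * v))) * gaussMat p q v U ≤
      gaussMat p q v {V | V - W ∈ U} := by
  set S := ∑ i, ∑ j, W i j ^ 2 with hS
  set T : (Fin p → Fin q → ℝ) → ℝ := fun V => (∑ i, ∑ j, W i j * V i j) / v with hT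
  have hTm : Measurable T := by fun_prop
  have hneg' : (fun V : Fin p → Fin q → ℝ => -V) ⁻¹' U = U := by
    ext V
    exact ⟨fun h => by simpa using hneg _ h, hneg V⟩
  have key : ∀ W' : Fin p → Fin q → ℝ, gaussMat p q v {V | V + W' ∈ U} =
      ∫⁻ V in U, ENNReal.ofReal (Real.exp ((∑ i, ∑ j, W' i j * V i j) / v
        - (∑ i, ∑ j, W' i j ^ 2) / (2 * v))) ∂(gaussMat p q v) := by
    intro W'
    rw [← withDensity_apply _ hU, ← gaussMat_map_add hv, Measure.map_apply (by fun_prop) hU]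
    rfl
  have k1 := key (-W)
  have k2 : gaussMat p q v {V | V + (-W) ∈ U} = gaussMat p q v {V | V + W ∈ U} := by
    conv_lhs => rw [← gaussMat_map_neg]
    rw [Measure.map_apply (by fun_prop)
      (by exact (measurable_id.add_const (-W)) hU)]
    congr 1
    ext V
    simp only [Set.mem_preimage, Set.mem_ofPred_eq]
    rw [← neg_add]
    exact ⟨fun h => by simpa using hneg _ h, hneg _⟩
  have k3 := key W
  simp only [sub_eq_add_neg]
  have : 2 * (ENNReal.ofReal (Real.exp (-S / (2 * v))) * gaussMat p q v U) ≤
      2 * gaussMat p q v {V | V + (-W) ∈ U} := by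
    rw [two_mul (gaussMat p q v {V | V + (-W) ∈ U})]
    nth_rw 2 [k2]
    rw [k1, k3, ← lintegral_add_left (by fun_prop), ← mul_assoc, ← setLIntegral_const]
    refine lintegral_mono fun V => ?_
    rw [← ENNReal.ofReal_add (by positivity) (by positivity),
      show (2 : ENNReal) = ENNReal.ofReal 2 by simp, ← ENNReal.ofReal_mul (by norm_num)]
    refine ENNReal.ofReal_le_ofReal ?_
    simp only [Pi.neg_apply, neg_mul, Finset.sum_neg_distrib, neg_sq]
    rw [← hS]
    have h1 := Real.one_le_cosh (T V)
    rw [Real.cosh_eq] at h1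
    rw [neg_div, neg_div, sub_eq_add_neg, sub_eq_add_neg, Real.exp_add, Real.exp_add]
    have := Real.exp_pos (-(S / (2 * v)))
    change 2 * _ ≤ Real.exp (-T V) * _ + Real.exp (T V) * _
    nlinarith
  exact (ENNReal.mul_le_mul_iff_right (by norm_num) (by norm_num)).1 this

/-! ### Spectral norm of Gaussian matrices -/

lemma norm_mulVec_le {p q : ℕ} (A : Matrix (Fin p) (Fin q) ℝ) (x : Fin q → ℝ) :
    ‖WithLp.toLp 2 (A.mulVec x)‖ ≤ specNorm A * ‖WithLp.toLp 2 x‖ :=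
  (LinearMap.toContinuousLinearMap (Matrix.toEuclideanLin A)).le_opNorm (WithLp.toLp 2 x)

lemma specNorm_nonneg {p q : ℕ} (A : Matrix (Fin p) (Fin q) ℝ) : 0 ≤ specNorm A := norm_nonneg _

lemma specNorm_smul {p q : ℕ} (c : ℝ) (A : Matrix (Fin p) (Fin q) ℝ) :
    specNorm (c • A) = |c| * specNorm A := by
  simp [specNorm, map_smul, norm_smul]

lemma specNorm_neg {p q : ℕ} (A : Matrix (Fin p) (Fin q) ℝ) :
    specNorm (-A) = specNorm A := by
  simp [specNorm]

/-- The spectral norm is at most the Frobenius norm. -/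
lemma specNorm_sq_le {p q : ℕ} (A : Matrix (Fin p) (Fin q) ℝ) :
    specNorm A ^ 2 ≤ ∑ i, ∑ j, A i j ^ 2 := by
  have h0 : 0 ≤ ∑ i, ∑ j, A i j ^ 2 := by positivity
  have : specNorm A ≤ Real.sqrt (∑ i, ∑ j, A i j ^ 2) := by
    refine ContinuousLinearMap.opNorm_le_bound _ (Real.sqrt_nonneg _) fun x => ?_
    rw [EuclideanSpace.norm_eq, EuclideanSpace.norm_eq, ← Real.sqrt_mul h0]
    refine Real.sqrt_le_sqrt ?_
    rw [Finset.sum_mul]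
    refine Finset.sum_le_sum fun i _ => ?_
    simp only [Real.norm_eq_abs, sq_abs]
    exact Finset.sum_mul_sq_le_sq_mul_sq Finset.univ (A i) x
  calc specNorm A ^ 2 ≤ Real.sqrt (∑ i, ∑ j, A i j ^ 2) ^ 2 := by
        gcongr; exact specNorm_nonneg A
    _ = _ := Real.sq_sqrt h0

lemma measurable_specNorm {p q : ℕ} :
    Measurable fun V : Fin p → Fin q → ℝ => specNorm (Matrix.of V) := by
  let e : (Fin p → Fin q → ℝ) →ₗ[ℝ] (EuclideanSpace ℝ (Fin q) →L[ℝ] EuclideanSpace ℝ (Fin p)) :=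
    LinearMap.toContinuousLinearMap.toLinearMap ∘ₗ Matrix.toEuclideanLin.toLinearMap ∘ₗ
      (Matrix.ofLinearEquiv ℝ).toLinearMap
  have he : Continuous e := LinearMap.continuous_of_finiteDimensional e
  exact he.norm.measurable

open ProbabilityTheory in
/-- The rows of a Gaussian matrix applied to a fixed vector are independent centred Gaussians, so the
exponential square moment of the image factorises. -/
lemma lintegral_gaussMat_exp {p q : ℕ} {v : NNReal} (x : EuclideanSpace ℝ (Fin q))
    (hv : v ≠ 0) (hx : ‖x‖ ≤ 2) :
    ∫⁻ V, ENNReal.ofReal (Real.exp (3 / (32 * v) * ‖WithLp.toLp 2 ((Matrix.of V).mulVec x)‖ ^ 2))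
      ∂(gaussMat p q v) ≤ 2 ^ p := by
  have hv0 : (0 : ℝ) < v := by positivity
  have hrow : ∫⁻ g : Fin q → ℝ, ENNReal.ofReal (Real.exp (3 / (32 * v) * (∑ j, g j * x j) ^ 2))
      ∂(Measure.pi fun _ => gaussianReal 0 v) ≤ 2 := by
    have hx2 : ‖x‖ ^ 2 ≤ 4 := by nlinarith [norm_nonneg x]
    have hc : 3 / (32 * (v : ℝ)) * (v * ‖x‖ ^ 2) = 3 / 32 * ‖x‖ ^ 2 := by field_simp
    refine (lintegral_exp_sq_le (Measure.pi fun _ => gaussianReal 0 v)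
      (Y := fun g : Fin q → ℝ => ∑ j, g j * x j) (by fun_prop) (τ := v * ‖x‖ ^ 2)
      (l := 3 / (32 * v)) (by positivity) (by linarith) ?_).trans ?_
    · intro t
      have : ∀ g : Fin q → ℝ, ENNReal.ofReal (Real.exp (t * ∑ j, g j * x j)) =
          ∏ j, ENNReal.ofReal (Real.exp ((t * x j) * g j)) := by
        intro g
        rw [Finset.mul_sum, Real.exp_sum, ENNReal.ofReal_prod_of_nonneg fun _ _ => by positivity]
        refine Finset.prod_congr rfl fun j _ => ?_
        congr 2; ring
      simp_rw [this]
      rw [lintegral_pi_prod (fun _ : Fin q => gaussianReal 0 v)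
        (fun j g => ENNReal.ofReal (Real.exp ((t * x j) * g))) (fun j => by fun_prop)]
      have h1 : ∀ s : ℝ, ∫⁻ g, ENNReal.ofReal (Real.exp (s * g)) ∂(gaussianReal 0 v) =
          ENNReal.ofReal (Real.exp (v * s ^ 2 / 2)) := by
        intro s
        rw [← ofReal_integral_eq_lintegral_ofReal
          (integrable_exp_mul_gaussianReal s) (by filter_upwards with x; positivity)]
        have := congrFun (mgf_id_gaussianReal (μ := 0) (v := v)) s
        simp only [mgf, id] at this
        rw [this]; simp
      simp_rw [h1]
      rw [← ENNReal.ofReal_prod_of_nonneg fun _ _ => by positivity, ← Real.exp_sum]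
      refine ENNReal.ofReal_le_ofReal (Real.exp_le_exp.2 (le_of_eq ?_))
      rw [EuclideanSpace.norm_sq_eq, Finset.mul_sum, Finset.mul_sum, Finset.sum_div]
      refine Finset.sum_congr rfl fun j _ => ?_
      rw [Real.norm_eq_abs, sq_abs]; ring
    · rw [hc]
      have h4 : (1 / 2 : ℝ) ≤ Real.sqrt (1 - 2 * (3 / 32 * ‖x‖ ^ 2)) :=
        Real.le_sqrt_of_sq_le (by nlinarith)
      have h2 : (2 : ENNReal) = ENNReal.ofReal 2 := by simp
      refine (ENNReal.ofReal_le_ofReal ?_).trans h2.ge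
      rw [div_le_iff₀ (by linarith)]
      linarith
  have : ∀ V : Fin p → Fin q → ℝ,
      ENNReal.ofReal (Real.exp (3 / (32 * v) * ‖WithLp.toLp 2 ((Matrix.of V).mulVec x)‖ ^ 2)) =
      ∏ i, ENNReal.ofReal (Real.exp (3 / (32 * v) * (∑ j, V i j * x j) ^ 2)) := by
    intro V
    rw [EuclideanSpace.norm_sq_eq, Finset.mul_sum, Real.exp_sum,
      ENNReal.ofReal_prod_of_nonneg fun _ _ => by positivity]
    refine Finset.prod_congr rfl fun i _ => ?_
    rw [Real.norm_eq_abs, sq_abs]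
    rfl
  simp_rw [this]
  rw [gaussMat, lintegral_pi_prod (fun _ : Fin p => Measure.pi fun _ : Fin q => gaussianReal 0 v)
    (fun i g => ENNReal.ofReal (Real.exp (3 / (32 * v) * (∑ j, g j * x j) ^ 2)))
    (fun i => by fun_prop)]
  refine (Finset.prod_le_prod' fun i _ => hrow).trans ?_
  simp

/-- `y ↦ exp (l ‖V y‖²)` lies below its averages over balls, so its value at a point of the unit ball
is controlled by its integral over the concentric ball of radius two. This replaces an `ε`-net. -/
lemma exp_le_ball_average {p q : ℕ} (V : Fin p → Fin q → ℝ) {l : ℝ} (hl : 0 ≤ l)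
    (x : EuclideanSpace ℝ (Fin q)) (hx : ‖x‖ < 1) :
    ENNReal.ofReal (Real.exp (l * ‖WithLp.toLp 2 ((Matrix.of V).mulVec x)‖ ^ 2)) *
      volume (Metric.ball (0 : EuclideanSpace ℝ (Fin q)) 1) ≤
    ∫⁻ y in Metric.ball (0 : EuclideanSpace ℝ (Fin q)) 2,
      ENNReal.ofReal (Real.exp (l * ‖WithLp.toLp 2 ((Matrix.of V).mulVec y)‖ ^ 2)) := by
  let A := LinearMap.toContinuousLinearMap (Matrix.toEuclideanLin (Matrix.of V))
  let F : EuclideanSpace ℝ (Fin q) → ENNReal := fun y => ENNReal.ofReal (Real.exp (l * ‖A y‖ ^ 2))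
  have hF : Measurable F := by fun_prop
  change F x * _ ≤ ∫⁻ y in _, F y
  set b : Set (EuclideanSpace ℝ (Fin q)) := Metric.ball 0 1
  have hb : MeasurableSet b := measurableSet_ball
  have h1 : ∫⁻ w in b, F (x + w) = ∫⁻ y in Metric.ball x 1, F y := by
    rw [← (measurePreserving_add_left volume x).setLIntegral_comp_preimage measurableSet_ball hF,
      preimage_add_ball, sub_self]
  have h2 : ∫⁻ w in b, F (x - w) = ∫⁻ w in b, F (x + w) := by
    have hG : Measurable fun w => F (x + w) := hF.comp (measurable_const_add x)
    rw [← (Measure.measurePreserving_neg volume).setLIntegral_comp_preimage hb hG]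
    have hnb : Neg.neg ⁻¹' b = b := by ext w; simp [b]
    rw [hnb]
    simp only [sub_eq_add_neg]
  have h3 : ∫⁻ y in Metric.ball x 1, F y ≤ ∫⁻ y in Metric.ball 0 2, F y := by
    refine lintegral_mono_set (Metric.ball_subset_ball' ?_)
    rw [dist_zero_right]; linarith
  -- pair `x + w` with `x - w`: the parallelogram law and AM-GM give `2 F x ≤ F (x - w) + F (x + w)`
  have h4 : 2 * (F x * volume b) ≤ 2 * ∫⁻ y in Metric.ball x 1, F y := by
    rw [← h1, two_mul (∫⁻ w in b, F (x + w))]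
    nth_rw 1 [← h2]
    have hG : Measurable fun w => F (x + w) := hF.comp (measurable_const_add x)
    rw [← lintegral_add_right _ hG, ← mul_assoc,
      ← setLIntegral_const]
    refine lintegral_mono fun w => ?_
    simp only [F]
    have h2' : ∀ a : ℝ, 2 * ENNReal.ofReal a = ENNReal.ofReal (2 * a) := fun a => by
      rw [ENNReal.ofReal_mul zero_le_two]; simp
    rw [← ENNReal.ofReal_add (by positivity) (by positivity), h2']
    refine ENNReal.ofReal_le_ofReal ?_
    have hp := parallelogram_law_with_norm ℝ (A x) (A w)
    rw [← map_add, ← map_sub] at hp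
    have hsum : l * ‖A x‖ ^ 2 ≤ (l * ‖A (x - w)‖ ^ 2 + l * ‖A (x + w)‖ ^ 2) / 2 := by
      nlinarith [mul_nonneg hl (sq_nonneg ‖A w‖)]
    set a := l * ‖A (x - w)‖ ^ 2
    set c := l * ‖A (x + w)‖ ^ 2
    have ha : Real.exp a = Real.exp (a / 2) ^ 2 := by rw [← Real.exp_nat_mul]; congr 1; push_cast; ring
    have hc : Real.exp c = Real.exp (c / 2) ^ 2 := by rw [← Real.exp_nat_mul]; congr 1; push_cast; ring
    have : Real.exp (l * ‖A x‖ ^ 2) ≤ Real.exp (a / 2) * Real.exp (c / 2) := by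
      rw [← Real.exp_add]; exact Real.exp_le_exp.2 (by linarith)
    nlinarith [sq_nonneg (Real.exp (a / 2) - Real.exp (c / 2))]
  exact ((ENNReal.mul_le_mul_iff_right (by norm_num) (by norm_num)).1 h4).trans h3

/-- Tail bound for the spectral norm: Markov's inequality for the integral over the ball of radius
two, whose volume is `2 ^ q` times that of the unit ball. -/
lemma gaussMat_specNorm_tail {p q : ℕ} {v : NNReal} (hv : v ≠ 0) {r : ℝ} (hr : 0 ≤ r) :
    gaussMat p q v {V | r < specNorm (Matrix.of V)} ≤
      ENNReal.ofReal (2 ^ (p + q) * Real.exp (-(3 / (32 * v) * r ^ 2))) := by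
  have hv0 : (0 : ℝ) < v := by positivity
  set l : ℝ := 3 / (32 * v) with hl
  have hl0 : 0 < l := by positivity
  set b : Set (EuclideanSpace ℝ (Fin q)) := Metric.ball 0 1
  have hb0 : volume b ≠ 0 := (Metric.measure_ball_pos _ _ one_pos).ne'
  have hb1 : volume b ≠ ⊤ := measure_ball_lt_top.ne
  let F : (Fin p → Fin q → ℝ) → EuclideanSpace ℝ (Fin q) → ENNReal := fun V y =>
    ENNReal.ofReal (Real.exp (l * ‖WithLp.toLp 2 ((Matrix.of V).mulVec y)‖ ^ 2))
  have hF : Measurable (Function.uncurry F) := by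
    have : Function.uncurry F = fun z => ENNReal.ofReal (Real.exp (l * ∑ i, (∑ j, z.1 i j * z.2 j) ^ 2)) := by
      ext z
      simp only [Function.uncurry, F]
      rw [EuclideanSpace.norm_sq_eq]
      simp only [Real.norm_eq_abs, sq_abs]
      rfl
    rw [this]
    fun_prop
  have hsub : {V : Fin p → Fin q → ℝ | r < specNorm (Matrix.of V)} ⊆
      {V | ENNReal.ofReal (Real.exp (l * r ^ 2)) * volume b ≤ ∫⁻ y in Metric.ball 0 2, F V y} := by
    intro V hV
    obtain ⟨x, hx, hrx⟩ := ContinuousLinearMap.exists_lt_apply_of_lt_opNorm _ hV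
    refine le_trans ?_ (exp_le_ball_average V hl0.le x hx)
    gcongr
    exact hrx.le
  refine (measure_mono hsub).trans ((meas_ge_le_lintegral_div
    hF.lintegral_prod_right.aemeasurable
    (mul_ne_zero (by simp [Real.exp_pos]) hb0) (ENNReal.mul_ne_top (by simp) hb1)).trans ?_)
  rw [lintegral_lintegral_swap hF.aemeasurable]
  have h1 : ∫⁻ y in Metric.ball 0 2, ∫⁻ V, F V y ∂(gaussMat p q v) ≤
      2 ^ p * (2 ^ q * volume b) := by
    calc _ ≤ ∫⁻ y in Metric.ball (0 : EuclideanSpace ℝ (Fin q)) 2, (2 : ENNReal) ^ p := by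
          refine setLIntegral_mono measurable_const fun y hy => ?_
          exact lintegral_gaussMat_exp y hv (by simpa using (mem_ball_zero_iff.1 hy).le)
      _ = _ := by
          rw [setLIntegral_const, Measure.addHaar_ball_of_pos volume _ two_pos]
          simp only [finrank_euclideanSpace, Fintype.card_fin]
          rw [ENNReal.ofReal_pow (by norm_num)]
          simp [b]
  rw [ENNReal.div_le_iff (mul_ne_zero (by simp [Real.exp_pos]) hb0) (ENNReal.mul_ne_top (by simp) hb1)]
  refine h1.trans (le_of_eq ?_)
  rw [← mul_assoc, ← mul_assoc, ← ENNReal.ofReal_mul (by positivity), mul_assoc (2 ^ _ : ℝ),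
    ← Real.exp_add, neg_add_cancel, Real.exp_zero, mul_one, ← pow_add, ENNReal.ofReal_pow (by norm_num)]
  simp

/-- A Gaussian matrix of dimensions at most `n` whose entries have variance `r² / (24 n)` has
spectral norm at most `r` with probability at least one half. -/
lemma gaussMat_specNorm_le {p q n : ℕ} (hn : 1 ≤ n) (hp : p ≤ n) (hq : q ≤ n) {v : NNReal} {r : ℝ}
    (hr : 0 < r) (hv : (v : ℝ) = r ^ 2 / (24 * n)) :
    ENNReal.ofReal (1 / 2) ≤ gaussMat p q v {V | specNorm (Matrix.of V) ≤ r} := by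
  have hn0 : (0 : ℝ) < n := by positivity
  have hv0 : v ≠ 0 := by
    rintro rfl
    have : 0 < r ^ 2 / (24 * (n : ℝ)) := by positivity
    rw [← hv] at this
    simp at this
  have ht := gaussMat_specNorm_tail (p := p) (q := q) hv0 hr.le
  have he : 3 / (32 * (v : ℝ)) * r ^ 2 = n * (9 / 4) := by
    rw [hv]; field_simp; norm_num
  have hbd : (2 : ℝ) ^ (p + q) * Real.exp (-(3 / (32 * v) * r ^ 2)) ≤ 1 / 2 := by
    rw [he]
    have h1 : (2 : ℝ) ^ (p + q) ≤ 4 ^ n := by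
      rw [show (4 : ℝ) = 2 ^ 2 by norm_num, ← pow_mul]
      exact pow_le_pow_right₀ (by norm_num) (by omega)
    have h2 : Real.exp (-(n * (9 / 4))) = Real.exp (-(9 / 4)) ^ n := by
      rw [← Real.exp_nat_mul]; congr 1; ring
    have h3 : Real.exp (-(9 / 4)) ≤ 1 / 8 := by
      have : (8 : ℝ) ≤ Real.exp (9 / 4) := by
        have h := Real.exp_one_gt_d9
        have : Real.exp (9 / 4) = Real.exp 1 ^ 2 * Real.exp (1 / 4) := by
          rw [← Real.exp_nat_mul, ← Real.exp_add]; norm_num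
        rw [this]
        have h5 := Real.add_one_le_exp (1 / 4 : ℝ)
        have h6 : (7.3 : ℝ) ≤ Real.exp 1 ^ 2 := by nlinarith
        nlinarith
      rw [Real.exp_neg, one_div]
      exact inv_anti₀ (by norm_num) this
    rw [h2]
    calc (2 : ℝ) ^ (p + q) * Real.exp (-(9 / 4)) ^ n ≤ 4 ^ n * (1 / 8) ^ n := by gcongr
      _ = (1 / 2) ^ n := by rw [← mul_pow]; norm_num
      _ ≤ (1 / 2) ^ 1 := pow_le_pow_of_le_one (by norm_num) (by norm_num) hn
      _ = 1 / 2 := pow_one _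
  have hc : {V : Fin p → Fin q → ℝ | specNorm (Matrix.of V) ≤ r} =
      {V | r < specNorm (Matrix.of V)}ᶜ := by ext; simp
  rw [hc, prob_compl_eq_one_sub (measurableSet_lt measurable_const measurable_specNorm)]
  refine le_trans ?_ (tsub_le_tsub_left (ht.trans (ENNReal.ofReal_le_ofReal hbd)) 1)
  rw [← ENNReal.ofReal_one, ← ENNReal.ofReal_sub _ (by norm_num)]
  norm_num

/-- Small-ball estimate: mass a Gaussian prior gives to a spectral-norm neighbourhood of `W`. -/
lemma gaussMat_smallBall {p q n : ℕ} (hn : 1 ≤ n) (hp : p ≤ n) (hq : q ≤ n) {v : NNReal} {r : ℝ}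
    (hr : 0 < r) (hv : (v : ℝ) = r ^ 2 / (24 * n)) (W : Matrix (Fin p) (Fin q) ℝ) :
    ENNReal.ofReal (Real.exp (-(12 * n / r ^ 2 * ∑ i, ∑ j, W i j ^ 2)) * (1 / 2)) ≤
      gaussMat p q v {V | specNorm (Matrix.of V - W) ≤ r} := by
  have hn0 : (0 : ℝ) < n := by positivity
  have hv0 : v ≠ 0 := by
    rintro rfl
    have : 0 < r ^ 2 / (24 * (n : ℝ)) := by positivity
    rw [← hv] at this
    simp at this
  have h := gaussMat_shift hv0 (fun i j => W i j)
    (U := {V : Fin p → Fin q → ℝ | specNorm (Matrix.of V) ≤ r})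
    (measurableSet_le measurable_specNorm measurable_const)
    (fun V hV => by
      change specNorm (-(Matrix.of V)) ≤ r
      rw [specNorm_neg]; exact hV)
  refine le_trans ?_ h
  rw [ENNReal.ofReal_mul (by positivity)]
  refine mul_le_mul' (le_of_eq ?_) (gaussMat_specNorm_le hn hp hq hr hv)
  congr 2
  rw [hv]; field_simp; ring

/-! ### PAC-Bayes inequality -/

/-- The generalization gap of the event `E`: its probability minus its empirical frequency. -/
noncomputable def gap {Z : Type*} [MeasurableSpace Z] (D : Measure Z) {m : ℕ} (E : Set Z)
    (s : Fin m → Z) : ℝ :=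
  (D E).toReal - (1 / (m : ℝ)) * ∑ i : Fin m, E.indicator (fun _ => (1 : ℝ)) (s i)

/-- Hoeffding: the gap of a fixed event is sub-Gaussian with variance proxy `1 / (4 m)`. -/
lemma lintegral_exp_gap_le {Z : Type*} [MeasurableSpace Z] (D : Measure Z) [IsProbabilityMeasure D]
    {m : ℕ} (hm : 0 < m) {E : Set Z} (hE : MeasurableSet E) (t : ℝ) :
    ∫⁻ s, ENNReal.ofReal (Real.exp (t * gap D E s)) ∂(Measure.pi fun _ : Fin m => D) ≤
      ENNReal.ofReal (Real.exp (t ^ 2 * (1 / (4 * m)) / 2)) := by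
  have hm0 : (0 : ℝ) < m := by positivity
  set X : Z → ℝ := fun z => 1 - E.indicator (fun _ => (1 : ℝ)) z with hX
  have hXm : Measurable X := measurable_const.sub (measurable_const.indicator hE)
  have hXi : ∫ z, X z ∂D = 1 - (D E).toReal := by
    rw [integral_sub (integrable_const _) ((integrable_const _).indicator hE),
      integral_indicator hE]
    simp [Measure.real]
  have hX01 : ∀ᵐ z ∂D, X z ∈ Set.Icc (0 : ℝ) 1 := by
    filter_upwards with z
    by_cases h : z ∈ E <;> simp [hX, h]
  have hsub := ProbabilityTheory.hasSubgaussianMGF_of_mem_Icc hXm.aemeasurable hX01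
  have h1 : ∫⁻ z, ENNReal.ofReal (Real.exp (t / m * (X z - ∫ z, X z ∂D))) ∂D ≤
      ENNReal.ofReal (Real.exp ((t / m) ^ 2 / 8)) := by
    rw [← ofReal_integral_eq_lintegral_ofReal (hsub.integrable_exp_mul _)
      (by filter_upwards with x; positivity)]
    refine ENNReal.ofReal_le_ofReal ((hsub.mgf_le (t / m)).trans (le_of_eq ?_))
    congr 1
    simp
    ring
  have h2 : ∀ s : Fin m → Z, ENNReal.ofReal (Real.exp (t * gap D E s)) =
      ∏ i, ENNReal.ofReal (Real.exp (t / m * (X (s i) - ∫ z, X z ∂D))) := by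
    intro s
    rw [← ENNReal.ofReal_prod_of_nonneg fun _ _ => by positivity, ← Real.exp_sum,
      ← Finset.mul_sum, hXi]
    congr 2
    simp only [hX, gap, sub_sub_sub_cancel_left, Finset.sum_sub_distrib, Finset.sum_const,
      Finset.card_univ, Fintype.card_fin, nsmul_eq_mul]
    field_simp
  simp_rw [h2]
  rw [lintegral_pi_prod (fun _ : Fin m => D)
    (fun _ z => ENNReal.ofReal (Real.exp (t / m * (X z - ∫ z, X z ∂D)))) (fun i => by fun_prop)]
  refine (Finset.prod_le_prod' fun i _ => h1).trans ?_
  rw [← ENNReal.ofReal_prod_of_nonneg fun _ _ => by positivity, ← Real.exp_sum]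
  refine ENNReal.ofReal_le_ofReal (Real.exp_le_exp.2 (le_of_eq ?_))
  simp only [Finset.sum_const, Finset.card_univ, Fintype.card_fin, nsmul_eq_mul]
  field_simp
  ring

/-- The exponent `2 m - 1` is just below the critical value `2 m` for the square moment. -/
lemma lintegral_exp_gap_sq_le {Z : Type*} [MeasurableSpace Z] (D : Measure Z)
    [IsProbabilityMeasure D] {m : ℕ} (hm : 0 < m) {E : Set Z} (hE : MeasurableSet E) :
    ∫⁻ s, ENNReal.ofReal (Real.exp ((2 * m - 1) * gap D E s ^ 2))
      ∂(Measure.pi fun _ : Fin m => D) ≤ ENNReal.ofReal (2 * m) := by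
  have hm1 : (1 : ℝ) ≤ m := by exact_mod_cast hm
  have hmeas : Measurable fun s : Fin m → Z => gap D E s := by
    have : Measurable (E.indicator fun _ => (1 : ℝ)) := measurable_const.indicator hE
    unfold gap
    fun_prop
  have he : 2 * ((2 * (m : ℝ) - 1) * (1 / (4 * m))) = 1 - 1 / (2 * m) := by field_simp; ring
  have hpos : 0 < 1 / (2 * (m : ℝ)) := by positivity
  refine (lintegral_exp_sq_le _ hmeas (τ := 1 / (4 * m)) (l := 2 * m - 1) (by linarith)
    (by linarith) fun t => lintegral_exp_gap_le D hm hE t).trans ?_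
  rw [he]
  refine ENNReal.ofReal_le_ofReal ?_
  rw [sub_sub_cancel, Real.sqrt_div zero_le_one, Real.sqrt_one, one_div_one_div]
  exact Real.sqrt_le_iff.2 ⟨by positivity, by nlinarith⟩

/-- PAC-Bayes for a fixed prior `P`: outside an event of probability `η`, every set `N` of
parameters on which the gap is at least `g` has `P`-mass at most `2m / η · exp(-(2m-1) g²)`. -/
lemma pacBayes {Z Θ : Type*} [MeasurableSpace Z] [MeasurableSpace Θ] (D : Measure Z)
    [IsProbabilityMeasure D] (P : Measure Θ) [IsProbabilityMeasure P] {m : ℕ} (hm : 0 < m)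
    (E : Set (Θ × Z)) (hE : MeasurableSet E) {η : ℝ} (hη : 0 < η) :
    ∃ T : Set (Fin m → Z), (Measure.pi fun _ : Fin m => D) T ≤ ENNReal.ofReal η ∧
      ∀ s ∉ T, ∀ (N : Set Θ) (c g : ℝ), 0 < c → ENNReal.ofReal c ≤ P N → 0 ≤ g →
        (∀ θ ∈ N, g ≤ gap D (Prod.mk θ ⁻¹' E) s) →
        (2 * m - 1) * g ^ 2 ≤ Real.log (2 * m / (η * c)) := by
  have hm1 : (1 : ℝ) ≤ m := by exact_mod_cast hm
  let F : (Fin m → Z) → Θ → ENNReal := fun s θ =>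
    ENNReal.ofReal (Real.exp ((2 * m - 1) * gap D (Prod.mk θ ⁻¹' E) s ^ 2))
  have hF : Measurable (Function.uncurry F) := by
    have h1 : Measurable fun θ => D (Prod.mk θ ⁻¹' E) := measurable_measure_prodMk_left hE
    have h2 : Measurable (E.indicator fun _ => (1 : ℝ)) := measurable_const.indicator hE
    have h3 : Function.uncurry F = fun z => ENNReal.ofReal (Real.exp ((2 * m - 1) *
      ((D (Prod.mk z.2 ⁻¹' E)).toReal -
        (1 / (m : ℝ)) * ∑ i : Fin m, E.indicator (fun _ => (1 : ℝ)) (z.2, z.1 i)) ^ 2)) := rfl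
    rw [h3]
    have h4 : Measurable fun z : (Fin m → Z) × Θ => (D (Prod.mk z.2 ⁻¹' E)).toReal :=
      (h1.comp measurable_snd).ennreal_toReal
    have h5 : ∀ i, Measurable fun z : (Fin m → Z) × Θ =>
        E.indicator (fun _ => (1 : ℝ)) (z.2, z.1 i) := fun i =>
      h2.comp (measurable_snd.prodMk ((measurable_pi_apply i).comp measurable_fst))
    fun_prop
  refine ⟨{s | ENNReal.ofReal (2 * m / η) ≤ ∫⁻ θ, F s θ ∂P}, ?_, ?_⟩
  · have hq : 0 < 2 * m / η := by positivity
    refine (meas_ge_le_lintegral_div hF.lintegral_prod_right.aemeasurable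
      (by simpa using hq) (by simp)).trans ?_
    rw [lintegral_lintegral_swap hF.aemeasurable]
    have : ∫⁻ θ, ∫⁻ s, F s θ ∂(Measure.pi fun _ : Fin m => D) ∂P ≤ ENNReal.ofReal (2 * m) := by
      calc _ ≤ ∫⁻ _, ENNReal.ofReal (2 * m) ∂P :=
            lintegral_mono fun θ => lintegral_exp_gap_sq_le D hm (measurable_prodMk_left hE)
        _ = _ := by simp
    rw [ENNReal.div_le_iff (by simpa using hq) (by simp), ← ENNReal.ofReal_mul hη.le]
    refine this.trans (ENNReal.ofReal_le_ofReal (le_of_eq ?_))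
    field_simp
  · intro s hs N c g hc hN hg hgap
    simp only [Set.mem_ofPred_eq, not_le] at hs
    have h1 : ENNReal.ofReal (Real.exp ((2 * m - 1) * g ^ 2)) * ENNReal.ofReal c ≤
        ∫⁻ θ, F s θ ∂P := by
      refine (mul_le_mul_right hN _).trans ((mul_meas_ge_le_lintegral₀
        (f := F s) (μ := P) ?_ (ENNReal.ofReal (Real.exp ((2 * m - 1) * g ^ 2)))).trans' ?_)
      · exact (hF.comp measurable_prodMk_left).aemeasurable
      · gcongr
        intro θ hθ
        refine ENNReal.ofReal_le_ofReal (Real.exp_le_exp.2 ?_)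
        have := hgap θ hθ
        have : 0 ≤ 2 * (m : ℝ) - 1 := by linarith
        gcongr
    have h2 := h1.trans_lt hs
    rw [← ENNReal.ofReal_mul (by positivity)] at h2
    have h3 := ((ENNReal.ofReal_lt_ofReal_iff (by positivity)).1 h2).le
    rw [Real.le_log_iff_exp_le (by positivity), ← div_div, le_div_iff₀ hc]
    exact h3

/-! ### Perturbation and homogeneity of ReLU networks -/

section Network

variable {d : ℕ → ℕ}

lemma norm_relu_sub_le {p : ℕ} (x y : Fin p → ℝ) :
    ‖WithLp.toLp 2 ((fun j => max (x j) 0) - fun j => max (y j) 0)‖ ≤ ‖WithLp.toLp 2 (x - y)‖ := by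
  rw [EuclideanSpace.norm_eq, EuclideanSpace.norm_eq]
  refine Real.sqrt_le_sqrt (Finset.sum_le_sum fun j _ => ?_)
  have := abs_max_sub_max_le_abs (x j) (y j) 0
  simp only [Pi.sub_apply, Real.norm_eq_abs]
  gcongr

/-- The vector fed to layer `k`: the raw input for `k = 0`, rectified activations afterwards. -/
noncomputable def layerInput (d : ℕ → ℕ) (W : (l : ℕ) → Matrix (Fin (d (l + 1))) (Fin (d l)) ℝ)
    (x : Fin (d 0) → ℝ) (k : ℕ) : Fin (d k) → ℝ :=
  if k = 0 then reluNet d W x k else fun j => max (reluNet d W x k j) 0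

lemma reluNet_succ (W : (l : ℕ) → Matrix (Fin (d (l + 1))) (Fin (d l)) ℝ)
    (x : Fin (d 0) → ℝ) (k : ℕ) :
    reluNet d W x (k + 1) = (W k).mulVec (layerInput d W x k) := rfl

lemma norm_layerInput_sub_le (V W : (l : ℕ) → Matrix (Fin (d (l + 1))) (Fin (d l)) ℝ)
    (x : Fin (d 0) → ℝ) (k : ℕ) :
    ‖WithLp.toLp 2 (layerInput d V x k - layerInput d W x k)‖ ≤
      ‖WithLp.toLp 2 (reluNet d V x k - reluNet d W x k)‖ := by
  unfold layerInput
  split_ifs with h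
  · exact le_rfl
  · exact norm_relu_sub_le _ _

lemma norm_layerInput_le (W : (l : ℕ) → Matrix (Fin (d (l + 1))) (Fin (d l)) ℝ)
    (x : Fin (d 0) → ℝ) (k : ℕ) :
    ‖WithLp.toLp 2 (layerInput d W x k)‖ ≤ ‖WithLp.toLp 2 (reluNet d W x k)‖ := by
  unfold layerInput
  split_ifs with h
  · exact le_rfl
  · have := norm_relu_sub_le (reluNet d W x k) 0
    simpa [Pi.sub_def] using this

lemma norm_reluNet_le (W : (l : ℕ) → Matrix (Fin (d (l + 1))) (Fin (d l)) ℝ)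
    (x : Fin (d 0) → ℝ) (k : ℕ) :
    ‖WithLp.toLp 2 (reluNet d W x k)‖ ≤
      (∏ l ∈ Finset.range k, specNorm (W l)) * ‖WithLp.toLp 2 x‖ := by
  induction k with
  | zero => simp [reluNet]
  | succ k ih =>
    rw [reluNet_succ, Finset.prod_range_succ, mul_comm (∏ l ∈ _, _), mul_assoc]
    exact (norm_mulVec_le _ _).trans
      (mul_le_mul_of_nonneg_left ((norm_layerInput_le W x k).trans ih) (specNorm_nonneg _))

lemma specNorm_le_add {p q : ℕ} (A C : Matrix (Fin p) (Fin q) ℝ) :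
    specNorm A ≤ specNorm C + specNorm (A - C) := by
  have : A = C + (A - C) := by abel
  unfold specNorm
  conv_lhs => rw [this, map_add, map_add]
  exact norm_add_le _ _

/-- Perturbing each layer of a network with layers of norm at most one by at most `r` changes the
output by at most `((1 + r)^k - 1) ‖x‖`. -/
lemma norm_reluNet_sub_le (V W : (l : ℕ) → Matrix (Fin (d (l + 1))) (Fin (d l)) ℝ)
    (x : Fin (d 0) → ℝ) {r : ℝ} (hr : 0 ≤ r) (k : ℕ)
    (hW : ∀ l < k, specNorm (W l) ≤ 1) (hV : ∀ l < k, specNorm (V l - W l) ≤ r) :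
    ‖WithLp.toLp 2 (reluNet d V x k - reluNet d W x k)‖ ≤ ((1 + r) ^ k - 1) * ‖WithLp.toLp 2 x‖ := by
  induction k with
  | zero => simp [reluNet]
  | succ k ih =>
    have ih := ih (fun l hl => hW l (by omega)) (fun l hl => hV l (by omega))
    have h1 : ‖WithLp.toLp 2 (layerInput d V x k)‖ ≤ (1 + r) ^ k * ‖WithLp.toLp 2 x‖ := by
      refine (norm_layerInput_le V x k).trans ((norm_reluNet_le V x k).trans ?_)
      gcongr
      calc ∏ l ∈ Finset.range k, specNorm (V l) ≤ ∏ _l ∈ Finset.range k, (1 + r) := by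
            refine Finset.prod_le_prod (fun l _ => specNorm_nonneg _) fun l hl => ?_
            have hl' := Finset.mem_range.1 hl
            exact (specNorm_le_add (V l) (W l)).trans
              (add_le_add (hW l (by omega)) (hV l (by omega)))
        _ = (1 + r) ^ k := by simp
    have h2 := (norm_layerInput_sub_le V W x k).trans ih
    have e : reluNet d V x (k + 1) - reluNet d W x (k + 1) =
        (V k - W k).mulVec (layerInput d V x k) +
          (W k).mulVec (layerInput d V x k - layerInput d W x k) := by
      rw [reluNet_succ, reluNet_succ, Matrix.sub_mulVec, Matrix.mulVec_sub]; abel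
    rw [e, WithLp.toLp_add]
    have h3 : ‖WithLp.toLp 2 ((V k - W k).mulVec (layerInput d V x k))‖ ≤
        r * ((1 + r) ^ k * ‖WithLp.toLp 2 x‖) :=
      (norm_mulVec_le _ _).trans (mul_le_mul (hV k (by omega)) h1 (norm_nonneg _) hr)
    have h4 : ‖WithLp.toLp 2 ((W k).mulVec (layerInput d V x k - layerInput d W x k))‖ ≤
        1 * (((1 + r) ^ k - 1) * ‖WithLp.toLp 2 x‖) :=
      (norm_mulVec_le _ _).trans (mul_le_mul (hW k (by omega)) h2 (norm_nonneg _) zero_le_one)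
    refine (norm_add_le _ _).trans ((add_le_add h3 h4).trans (le_of_eq ?_))
    ring

/-- Positive homogeneity of the network in each layer. -/
lemma reluNet_smul (V W : (l : ℕ) → Matrix (Fin (d (l + 1))) (Fin (d l)) ℝ)
    (c : ℕ → ℝ) (hc : ∀ l, 0 ≤ c l) (x : Fin (d 0) → ℝ) (k : ℕ) (h : ∀ l < k, V l = c l • W l) :
    reluNet d V x k = (∏ l ∈ Finset.range k, c l) • reluNet d W x k := by
  induction k with
  | zero => simp [reluNet]
  | succ k ih =>
    have ih := ih fun l hl => h l (by omega)
    have hp : 0 ≤ ∏ l ∈ Finset.range k, c l := Finset.prod_nonneg fun l _ => hc l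
    have h1 : layerInput d V x k = (∏ l ∈ Finset.range k, c l) • layerInput d W x k := by
      unfold layerInput
      rw [ih]
      split_ifs with h0
      · rfl
      · ext j
        simp only [Pi.smul_apply, smul_eq_mul]
        rw [mul_max_of_nonneg _ _ hp, mul_zero]
    rw [reluNet_succ, reluNet_succ, h1, h k (by omega), Matrix.smul_mulVec, Matrix.mulVec_smul,
      smul_smul, Finset.prod_range_succ, mul_comm]

lemma measurable_reluNet (k : ℕ) :
    Measurable fun z : ((l : ℕ) → Fin (d (l + 1)) → Fin (d l) → ℝ) × (Fin (d 0) → ℝ) =>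
      reluNet d (fun l => Matrix.of (z.1 l)) z.2 k := by
  induction k with
  | zero => exact measurable_snd
  | succ k ih =>
    have h1 : ∀ j, Measurable fun z : ((l : ℕ) → Fin (d (l + 1)) → Fin (d l) → ℝ) ×
        (Fin (d 0) → ℝ) => layerInput d (fun l => Matrix.of (z.1 l)) z.2 k j := by
      intro j
      have hj := (measurable_pi_apply j).comp ih
      unfold layerInput
      split_ifs with h0
      · exact hj
      · exact hj.max measurable_const
    refine measurable_pi_lambda _ fun i => ?_
    have h2 : ∀ j, Measurable fun z : ((l : ℕ) → Fin (d (l + 1)) → Fin (d l) → ℝ) ×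
        (Fin (d 0) → ℝ) => z.1 k i j := fun j => by fun_prop
    have e : (fun z : ((l : ℕ) → Fin (d (l + 1)) → Fin (d l) → ℝ) × (Fin (d 0) → ℝ) =>
        reluNet d (fun l => Matrix.of (z.1 l)) z.2 (k + 1) i) = fun z =>
        ∑ j, z.1 k i j * layerInput d (fun l => Matrix.of (z.1 l)) z.2 k j := rfl
    rw [e]
    exact Finset.measurable_fun_sum _ fun j _ => (h2 j).mul (h1 j)

lemma abs_apply_le_norm {p : ℕ} (x : Fin p → ℝ) (i : Fin p) : |x i| ≤ ‖WithLp.toLp 2 x‖ := by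
  simpa using PiLp.norm_apply_le (WithLp.toLp 2 x) i

end Network


/-! ### Numerical estimates -/

/-- With `a ≥ 1` and per-layer radius `1 / (3 a L)`, the output perturbation is at most
`‖x‖ / (2 a)`. -/
lemma one_add_pow_sub_one_le {L : ℕ} (hL : 1 ≤ L) {a : ℝ} (ha : 1 ≤ a) :
    (1 + 1 / (3 * a * L)) ^ L - 1 ≤ 1 / (2 * a) := by
  have hL0 : (0 : ℝ) < L := by exact_mod_cast hL
  set t := 1 / (3 * a) with ht
  have ht0 : 0 < t := by positivity
  have ht1 : t ≤ 1 / 3 := by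
    rw [ht, div_le_div_iff₀ (by positivity) (by norm_num)]; linarith
  have h1 : (1 + 1 / (3 * a * L)) ^ L ≤ Real.exp t := by
    have : (1 + 1 / (3 * a * L)) ≤ Real.exp (1 / (3 * a * L)) := by
      have := Real.add_one_le_exp (1 / (3 * a * L)); linarith
    calc _ ≤ Real.exp (1 / (3 * a * L)) ^ L := by gcongr
      _ = Real.exp t := by rw [← Real.exp_nat_mul]; congr 1; rw [ht]; field_simp
  have h2 : Real.exp t ≤ 1 + t + t ^ 2 := by
    have := Real.abs_exp_sub_one_sub_id_le (x := t) (by rw [abs_of_pos ht0]; linarith)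
    have := (abs_le.1 this).2
    linarith
  have h3 : 1 / (2 * a) = 3 / 2 * t := by rw [ht]; field_simp
  rw [h3]
  nlinarith

/-- With `M = A² S L² n`: the exponent paid to the prior and the number of factors `1 / 2` are both
bounded by multiples of `M`. -/
lemma numeric_aux {k L n A S M : ℝ} (hL0 : 1 ≤ L) (hn0 : 1 ≤ n) (hA : 1 ≤ A) (hS : 1 ≤ S)
    (hk0 : 0 ≤ k) (hk : k ≤ 5 * A) (hM : M = A ^ 2 * S * L ^ 2 * n) :
    27 / 4 * (n * k ^ 2 * L ^ 2 * S) ≤ 675 / 4 * M ∧ k + 1 + L ≤ 7 * M := by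
  have hA2 : A ≤ A ^ 2 := le_self_pow₀ hA two_ne_zero
  have hL2 : L ≤ L ^ 2 := le_self_pow₀ hL0 two_ne_zero
  have hSn : 1 ≤ S * n := one_le_mul_of_one_le_of_one_le hS hn0
  have hMA : A ^ 2 ≤ M := by
    have : 1 ≤ S * n * L ^ 2 := one_le_mul_of_one_le_of_one_le hSn (hL0.trans hL2)
    calc A ^ 2 ≤ A ^ 2 * (S * n * L ^ 2) := le_mul_of_one_le_right (by positivity) this
      _ = M := by rw [hM]; ring
  have hML : L ≤ M := by
    have h1 : 1 ≤ A ^ 2 * (S * n) := one_le_mul_of_one_le_of_one_le (hA.trans hA2) hSn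
    calc L ≤ L ^ 2 := hL2
      _ ≤ L ^ 2 * (A ^ 2 * (S * n)) := le_mul_of_one_le_right (by positivity) h1
      _ = M := by rw [hM]; ring
  refine ⟨?_, by linarith⟩
  have hk2 : k ^ 2 ≤ (5 * A) ^ 2 := pow_le_pow_left₀ hk0 hk 2
  have : n * k ^ 2 * L ^ 2 * S ≤ n * (5 * A) ^ 2 * L ^ 2 * S := by gcongr
  calc 27 / 4 * (n * k ^ 2 * L ^ 2 * S) ≤ 27 / 4 * (n * (5 * A) ^ 2 * L ^ 2 * S) := by gcongr
    _ = _ := by rw [hM]; ring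

/-- The logarithm produced by the PAC-Bayes bound at scale `k`, with the small-ball mass inserted, is
at most the numerator of the generalization bound. -/
lemma numeric_bound {m L n k : ℕ} (hm : 1 ≤ m) (hL : 1 ≤ L) (hn : 1 ≤ n) {A S δ : ℝ}
    (hA : 1 ≤ A) (hS : 1 ≤ S) (hδ : 0 < δ) (hk : (k : ℝ) ≤ 5 * A) (hk0 : 0 < k) :
    Real.log (2 * m / (δ / 2 / 2 ^ k *
      (Real.exp (-(12 * n / (1 / (3 * ((k : ℝ) / 4) * L)) ^ 2 * S)) * (1 / 2) ^ L))) ≤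
    Real.log (8 * L * m / δ) + (1 / (2 * L)) * Real.log m +
      8 * Real.exp 1 ^ 4 * (A ^ 2 * S) * L ^ 2 * n * Real.log (2 * L * n) := by
  have hm0 : (1 : ℝ) ≤ m := by exact_mod_cast hm
  have hL0 : (1 : ℝ) ≤ L := by exact_mod_cast hL
  have hn0 : (1 : ℝ) ≤ n := by exact_mod_cast hn
  have hk1 : (0 : ℝ) < k := by exact_mod_cast hk0
  have e1 : 12 * n / (1 / (3 * ((k : ℝ) / 4) * L)) ^ 2 * S = 27 / 4 * (n * k ^ 2 * L ^ 2 * S) := by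
    field_simp; norm_num
  rw [e1]
  set Q := 27 / 4 * (n * (k : ℝ) ^ 2 * L ^ 2 * S) with hQ
  have e2 : 2 * m / (δ / 2 / 2 ^ k * (Real.exp (-Q) * (1 / 2) ^ L)) =
      (2 * m / δ) * (2 ^ (k + 1 + L) * Real.exp Q) := by
    rw [Real.exp_neg, one_div, inv_pow, pow_add, pow_add]
    field_simp
  rw [e2, Real.log_mul (by positivity) (by positivity), Real.log_mul (by positivity) (by positivity),
    Real.log_pow, Real.log_exp]
  have l1 : Real.log (2 * m / δ) ≤ Real.log (8 * L * m / δ) := by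
    refine Real.log_le_log (by positivity) ?_
    gcongr
    linarith
  have l2 : 0 ≤ (1 / (2 * (L : ℝ))) * Real.log m :=
    mul_nonneg (by positivity) (Real.log_nonneg hm0)
  have l3 : Real.log 2 ≤ Real.log (2 * L * n) := by
    refine Real.log_le_log (by norm_num) ?_
    have := one_le_mul_of_one_le_of_one_le hL0 hn0
    linarith
  have l4 := Real.log_two_gt_d9
  have l5 := Real.log_two_lt_d9
  have l6 : (48 : ℝ) ≤ Real.exp 1 ^ 4 := by
    have := Real.exp_one_gt_d9
    calc (48 : ℝ) ≤ 2.7 ^ 4 := by norm_num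
      _ ≤ _ := by gcongr; linarith
  have hS0 : 0 ≤ S := by linarith
  obtain ⟨hQM, hkL⟩ := numeric_aux hL0 hn0 hA hS hk1.le hk rfl
  set M := A ^ 2 * S * L ^ 2 * n with hM
  have hM0 : 0 ≤ M := by positivity
  have f1 : ((k + 1 + L : ℕ) : ℝ) * Real.log 2 ≤ 7 * M := by
    push_cast
    calc ((k : ℝ) + 1 + L) * Real.log 2 ≤ ((k : ℝ) + 1 + L) * 1 := by
          gcongr
          linarith
      _ ≤ 7 * M := by linarith
  have f2 : 8 * 48 * 0.69 * M ≤
      8 * Real.exp 1 ^ 4 * (A ^ 2 * S) * L ^ 2 * n * Real.log (2 * L * n) := by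
    calc 8 * 48 * 0.69 * M ≤ 8 * Real.exp 1 ^ 4 * Real.log (2 * L * n) * M := by
          gcongr
          linarith
      _ = _ := by rw [hM]; ring
  linarith

/-! ### The generalization bound -/

/-- The prior over weight sequences: independent centred Gaussian entries of variance `v`. -/
noncomputable def gaussPrior (d : ℕ → ℕ) (v : NNReal) :
    Measure ((l : ℕ) → Fin (d (l + 1)) → Fin (d l) → ℝ) :=
  Measure.infinitePi fun l => gaussMat (d (l + 1)) (d l) v

instance (d : ℕ → ℕ) (v : NNReal) : IsProbabilityMeasure (gaussPrior d v) := by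
  unfold gaussPrior; infer_instance

/-- Small-ball estimate for the whole network: the layers are independent under the prior. -/
lemma gaussPrior_ball {d : ℕ → ℕ} {L n : ℕ} (hn : 1 ≤ n) (hd : ∀ l ≤ L, d l ≤ n) {v : NNReal}
    {r : ℝ} (hr : 0 < r) (hv : (v : ℝ) = r ^ 2 / (24 * n))
    (W : (l : ℕ) → Matrix (Fin (d (l + 1))) (Fin (d l)) ℝ) :
    ENNReal.ofReal (Real.exp (-(12 * n / r ^ 2 *
      ∑ l ∈ Finset.range L, ∑ i, ∑ j, W l i j ^ 2)) * (1 / 2) ^ L) ≤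
      gaussPrior d v {V | ∀ l < L, specNorm (Matrix.of (V l) - W l) ≤ r} := by
  have e : {V : (l : ℕ) → Fin (d (l + 1)) → Fin (d l) → ℝ |
      ∀ l < L, specNorm (Matrix.of (V l) - W l) ≤ r} =
      Set.pi (Finset.range L : Set ℕ) fun l => {U | specNorm (Matrix.of U - W l) ≤ r} := by
    ext V; simp [Set.mem_pi]
  have hmeas : ∀ l ∈ Finset.range L, MeasurableSet
      {U : Fin (d (l + 1)) → Fin (d l) → ℝ | specNorm (Matrix.of U - W l) ≤ r} := by
    intro l _
    have h1 : Measurable fun U : Fin (d (l + 1)) → Fin (d l) → ℝ => U - Matrix.of.symm (W l) := by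
      fun_prop
    exact (measurable_specNorm.comp h1) measurableSet_Iic
  rw [e, gaussPrior, Measure.infinitePi_pi _ hmeas]
  have e2 : Real.exp (-(12 * n / r ^ 2 *
      ∑ l ∈ Finset.range L, ∑ i, ∑ j, W l i j ^ 2)) * (1 / 2) ^ L =
      ∏ l ∈ Finset.range L,
        (Real.exp (-(12 * n / r ^ 2 * ∑ i, ∑ j, W l i j ^ 2)) * (1 / 2)) := by
    rw [Finset.prod_mul_distrib, ← Real.exp_sum, Finset.prod_const, Finset.card_range,
      Finset.sum_neg_distrib, Finset.mul_sum]
  rw [e2, ENNReal.ofReal_prod_of_nonneg fun _ _ => by positivity]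
  refine Finset.prod_le_prod' fun l hl => ?_
  have hl' := Finset.mem_range.1 hl
  exact gaussMat_smallBall hn (hd _ (by omega)) (hd _ (by omega)) hr hv (W l)

/-- If `h` is uniformly within `τ` of `g` and `f = Π h` with `2 τ Π ≤ γ`, then the gap between the
risk of `f` and its empirical `γ`-margin risk is at most the gap of `g` at threshold `τ`. -/
lemma sub_le_gap {X : Type*} [MeasurableSpace X] (D : Measure (X × ℝ)) [IsProbabilityMeasure D]
    {G : X → Prop} (hG : ∀ᵐ p ∂D, G p.1 ∧ (p.2 = 1 ∨ p.2 = -1)) {m : ℕ} (s : Fin m → X × ℝ)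
    (hs : ∀ i, G (s i).1 ∧ ((s i).2 = 1 ∨ (s i).2 = -1)) {f g h : X → ℝ} {c τ γ : ℝ}
    (hc : 0 < c) (hf : ∀ x, f x = c * h x) (hgh : ∀ x, G x → |g x - h x| ≤ τ)
    (hγ : c * (2 * τ) ≤ γ) :
    (D {p | p.2 * f p.1 < 0}).toReal -
        (1 / (m : ℝ)) * ∑ i : Fin m, (if (s i).2 * f (s i).1 < γ then (1 : ℝ) else 0) ≤
      gap D {p | p.2 * g p.1 < τ} s := by
  have key : ∀ p : X × ℝ, G p.1 ∧ (p.2 = 1 ∨ p.2 = -1) → |p.2 * g p.1 - p.2 * h p.1| ≤ τ := by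
    rintro ⟨x, y⟩ ⟨hx, hy⟩
    have := hgh x hx
    rw [← mul_sub, abs_mul]
    rcases hy with hy | hy <;> simp only at hy <;> simpa [hy] using this
  unfold gap
  refine sub_le_sub (ENNReal.toReal_mono (measure_ne_top _ _) (measure_mono_ae ?_)) ?_
  · filter_upwards [hG] with p hp hpf
    have h1 := abs_le.1 (key p hp)
    have h2 : p.2 * f p.1 < 0 := hpf
    rw [hf] at h2
    have h3 : p.2 * h p.1 < 0 := by
      by_contra hcon
      have := mul_nonneg hc.le (not_lt.1 hcon)
      linarith
    change p.2 * g p.1 < τ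
    linarith
  · refine mul_le_mul_of_nonneg_left (Finset.sum_le_sum fun i _ => ?_) (by positivity)
    rw [Set.indicator_apply]
    split_ifs with h1 h2 h2
    · exact le_rfl
    · refine absurd ?_ h2
      have h3 := abs_le.1 (key _ (hs i))
      have h4 : (s i).2 * g (s i).1 < τ := h1
      have h5 : (s i).2 * h (s i).1 < 2 * τ := by linarith
      calc (s i).2 * f (s i).1 = c * ((s i).2 * h (s i).1) := by rw [hf]; ring
        _ < c * (2 * τ) := mul_lt_mul_of_pos_left h5 hc
        _ ≤ γ := hγ
    · exact zero_le_one
    · exact le_rfl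

/-- Dividing each of the first `L` layers by its spectral norm rescales the network by the product of
the norms. -/
lemma exists_normalized {L : ℕ} {d : ℕ → ℕ}
    (W : (l : ℕ) → Matrix (Fin (d (l + 1))) (Fin (d l)) ℝ)
    (hW : 0 < ∏ l ∈ Finset.range L, specNorm (W l)) :
    ∃ U : (l : ℕ) → Matrix (Fin (d (l + 1))) (Fin (d l)) ℝ,
      (∀ l < L, specNorm (U l) = 1) ∧
      (∀ x, reluNet d W x L = (∏ l ∈ Finset.range L, specNorm (W l)) • reluNet d U x L) ∧
      (∑ l ∈ Finset.range L, ∑ i, ∑ j, U l i j ^ 2) =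
        ∑ l ∈ Finset.range L, (∑ i, ∑ j, (W l i j) ^ 2) / (specNorm (W l)) ^ 2 := by
  have h0 : ∀ l < L, specNorm (W l) ≠ 0 := fun l hl h =>
    hW.ne' (Finset.prod_eq_zero (Finset.mem_range.2 hl) h)
  refine ⟨fun l => (specNorm (W l))⁻¹ • W l, fun l hl => ?_, fun x => ?_, ?_⟩
  · rw [specNorm_smul, abs_of_nonneg (inv_nonneg.2 (specNorm_nonneg _)), inv_mul_cancel₀ (h0 l hl)]
  · refine reluNet_smul _ _ _ (fun l => specNorm_nonneg _) x L fun l hl => ?_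
    rw [smul_smul, mul_inv_cancel₀ (h0 l hl), one_smul]
  · refine Finset.sum_congr rfl fun l _ => ?_
    simp only [Matrix.smul_apply, smul_eq_mul, mul_pow, ← Finset.mul_sum]
    rw [inv_pow, div_eq_inv_mul]

lemma abs_reluNet_sub_le {L : ℕ} (hL : 1 ≤ L) {d : ℕ → ℕ}
    (V U : (l : ℕ) → Matrix (Fin (d (l + 1))) (Fin (d l)) ℝ) {a B : ℝ} (ha : 1 ≤ a)
    (hU : ∀ l < L, specNorm (U l) = 1)
    (hV : ∀ l < L, specNorm (V l - U l) ≤ 1 / (3 * a * L)) (x : Fin (d 0) → ℝ)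
    (hx : ‖WithLp.toLp 2 x‖ ≤ B) (i : Fin (d L)) :
    |reluNet d V x L i - reluNet d U x L i| ≤ B / (2 * a) := by
  have hr : (0 : ℝ) ≤ 1 / (3 * a * L) := by positivity
  refine (abs_apply_le_norm (reluNet d V x L - reluNet d U x L) i).trans
    ((norm_reluNet_sub_le V U x hr L (fun l hl => (hU l hl).le) hV).trans ?_)
  calc _ ≤ 1 / (2 * a) * B :=
        mul_le_mul (one_add_pow_sub_one_le hL ha) hx (norm_nonneg _) (by positivity)
    _ = B / (2 * a) := by ring

/-- Pairs (weights, example) on which the network has margin below `τ` at output coordinate `i`. -/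
def thresholdEvent (d : ℕ → ℕ) (L : ℕ) (i : Fin (d L)) (τ : ℝ) :
    Set (((l : ℕ) → Fin (d (l + 1)) → Fin (d l) → ℝ) × ((Fin (d 0) → ℝ) × ℝ)) :=
  {z | z.2.2 * reluNet d (fun l => Matrix.of (z.1 l)) z.2.1 L i < τ}

lemma measurableSet_thresholdEvent (d : ℕ → ℕ) (L : ℕ) (i : Fin (d L)) (τ : ℝ) :
    MeasurableSet (thresholdEvent d L i τ) := by
  have h1 : Measurable fun z : ((l : ℕ) → Fin (d (l + 1)) → Fin (d l) → ℝ) ×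
      ((Fin (d 0) → ℝ) × ℝ) => reluNet d (fun l => Matrix.of (z.1 l)) z.2.1 L i :=
    (measurable_pi_apply i).comp ((measurable_reluNet (d := d) L).comp
      (measurable_fst.prodMk measurable_snd.fst))
  exact measurableSet_lt (measurable_snd.snd.mul h1) measurable_const

/-- Union bound: exceptional events of probabilities `δ / 2 ^ (k + 1)` and a null set together
cost at most `δ`. Neither the exceptional events nor `S` need be measurable. -/
lemma one_sub_le_measure {Ω : Type*} [MeasurableSpace Ω] {μ : Measure Ω} [IsProbabilityMeasure μ]
    {S Z : Set Ω} {T : ℕ → Set Ω} {δ : ℝ} (hδ : 0 ≤ δ) (hZ : μ Z = 0)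
    (hT : ∀ k, μ (T k) ≤ ENNReal.ofReal (δ / 2 / 2 ^ k))
    (h : ∀ s, (∀ k, s ∉ T k) → s ∉ Z → s ∈ S) : 1 - ENNReal.ofReal δ ≤ μ S := by
  have hU : μ (⋃ k, T k) ≤ ENNReal.ofReal δ := by
    refine (measure_iUnion_le _).trans ((ENNReal.tsum_le_tsum hT).trans (le_of_eq ?_))
    rw [← ENNReal.ofReal_tsum_of_nonneg (fun k => by positivity) (summable_geometric_two' δ),
      tsum_geometric_two' δ]
  have hcover : (Set.univ : Set Ω) ⊆ S ∪ ((⋃ k, T k) ∪ Z) := by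
    intro s _
    by_cases h1 : s ∈ ⋃ k, T k
    · exact Or.inr (Or.inl h1)
    by_cases h2 : s ∈ Z
    · exact Or.inr (Or.inr h2)
    exact Or.inl (h s (fun k hk => h1 (Set.mem_iUnion.2 ⟨k, hk⟩)) h2)
  rw [tsub_le_iff_right]
  calc (1 : ENNReal) = μ Set.univ := measure_univ.symm
    _ ≤ μ S + (μ (⋃ k, T k) + μ Z) := (measure_mono hcover).trans
        ((measure_union_le _ _).trans (add_le_add le_rfl (measure_union_le _ _)))
    _ ≤ μ S + ENNReal.ofReal δ := by rw [hZ, add_zero]; exact add_le_add le_rfl hU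

lemma ae_pi_forall {Z : Type*} [MeasurableSpace Z] {D : Measure Z} [IsProbabilityMeasure D]
    {P : Z → Prop} (h : ∀ᵐ p ∂D, P p) (m : ℕ) :
    ∀ᵐ s ∂(Measure.pi fun _ : Fin m => D), ∀ i, P (s i) :=
  ae_all_iff.2 fun i =>
    (measurePreserving_eval (fun _ : Fin m => D) i).quasiMeasurePreserving.ae h

/-- Theorem (Neyshabur et al., PAC-Bayesian spectral bound): for an `L`-layer
scalar-output ReLU network, data supported on `‖x‖₂ ≤ B`, `y ∈ {−1,1}`, maximal width
`n`, margin `γ > 0`, and `δ ∈ (0,1)`: with probability at least `1−δ` over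
`S_m ∼ D^m`, simultaneously for all weights `θ`,
`R(f_θ) ≤ R̂_{γ,m}(f_θ) + √((log(8Lm/δ) + log(m)/(2L) + 8e⁴(B·R(θ)/γ)²L²n·log(2Ln))/(2m−1))`. -/
theorem relu_net_spectral_generalization_bound
    (L : ℕ) (hL : 1 ≤ L) (d : ℕ → ℕ) (hdL : d L = 1) (hpos : 0 < d L)
    (n : ℕ) (hn : n = (Finset.range (L + 1)).sup d)
    (B : ℝ) (D : Measure ((Fin (d 0) → ℝ) × ℝ)) [IsProbabilityMeasure D]
    (hsupp : ∀ᵐ p ∂D, Real.sqrt (∑ i, p.1 i ^ 2) ≤ B ∧ (p.2 = 1 ∨ p.2 = -1))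
    (m : ℕ) (hm : 0 < m)
    (γ : ℝ) (hγ : 0 < γ) (δ : ℝ) (hδ : δ ∈ Set.Ioo (0 : ℝ) 1) :
    1 - ENNReal.ofReal δ ≤
      (Measure.pi fun _ : Fin m => D) {s : Fin m → (Fin (d 0) → ℝ) × ℝ |
        ∀ W : (l : ℕ) → Matrix (Fin (d (l + 1))) (Fin (d l)) ℝ,
          (D {p : (Fin (d 0) → ℝ) × ℝ |
              p.2 * reluNet d W p.1 L ⟨0, hpos⟩ < 0}).toReal ≤
            ((1 / (m : ℝ)) * ∑ i : Fin m,
              if (s i).2 * reluNet d W (s i).1 L ⟨0, hpos⟩ < γ then (1 : ℝ) else 0) +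
            Real.sqrt ((Real.log (8 * L * m / δ) + (1 / (2 * L)) * Real.log m +
              8 * Real.exp 1 ^ 4 * (B * spectralComplexity L d W / γ) ^ 2 *
                L ^ 2 * n * Real.log (2 * L * n)) / (2 * m - 1))} := by
  have hd : ∀ l ≤ L, d l ≤ n := fun l hl => by
    rw [hn]; exact Finset.le_sup (f := d) (Finset.mem_range.2 (by omega))
  have hn1 : 1 ≤ n := hdL ▸ hd L le_rfl
  have hn0 : (0 : ℝ) < n := by exact_mod_cast hn1
  have hL0 : (0 : ℝ) < L := by exact_mod_cast hL
  have hm1 : (1 : ℝ) ≤ m := by exact_mod_cast hm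
  have hδ0 := hδ.1
  -- `WithLp.toLp 2` carries the Euclidean norm; the bare function type carries the sup norm
  set G : (Fin (d 0) → ℝ) → Prop := fun x => ‖WithLp.toLp 2 x‖ ≤ B with hGdef
  have hnorm : ∀ x : Fin (d 0) → ℝ, ‖WithLp.toLp 2 x‖ = Real.sqrt (∑ i, x i ^ 2) := fun x => by
    rw [EuclideanSpace.norm_eq]; simp
  have hG : ∀ᵐ p ∂D, G p.1 ∧ (p.2 = 1 ∨ p.2 = -1) := by
    filter_upwards [hsupp] with p hp
    exact ⟨(hnorm p.1).le.trans hp.1, hp.2⟩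
  have hB : 0 ≤ B := by
    obtain ⟨p, hp⟩ := hG.exists
    exact (norm_nonneg _).trans hp.1
  -- scale `k` stands for margin-normalised sizes `A ≤ k / 4`, with failure probability `δ / 2 ^ (k + 1)`
  have hpb := fun k : ℕ => pacBayes D
    (gaussPrior d (Real.toNNReal ((1 / (3 * ((k : ℝ) / 4) * L)) ^ 2 / (24 * n)))) hm
    (thresholdEvent d L ⟨0, hpos⟩ (B / (2 * ((k : ℝ) / 4))))
    (measurableSet_thresholdEvent d L ⟨0, hpos⟩ _) (η := δ / 2 / 2 ^ k) (by positivity)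
  choose T hT hTs using hpb
  have hZ : (Measure.pi fun _ : Fin m => D)
      {s | ¬ ∀ i, G (s i).1 ∧ ((s i).2 = 1 ∨ (s i).2 = -1)} = 0 :=
    ae_iff.1 (ae_pi_forall hG m)
  refine one_sub_le_measure hδ0.le hZ hT fun s hsT hsZ W => ?_
  have hsG : ∀ i, G (s i).1 ∧ ((s i).2 = 1 ∨ (s i).2 = -1) := not_not.1 hsZ
  set c := ∏ l ∈ Finset.range L, specNorm (W l) with hcdef
  have hc0 : 0 ≤ c := Finset.prod_nonneg fun l _ => specNorm_nonneg _
  rcases lt_or_ge (B * c / γ) 1 with hA | hA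
  · -- every sample has margin below `γ`, so the empirical margin risk is `1`
    have hall : ∀ i, (s i).2 * reluNet d W (s i).1 L ⟨0, hpos⟩ < γ := by
      intro i
      have h1 : |reluNet d W (s i).1 L ⟨0, hpos⟩| ≤ c * B :=
        (abs_apply_le_norm _ _).trans ((norm_reluNet_le W _ L).trans
          (mul_le_mul_of_nonneg_left (hsG i).1 hc0))
      have h2 : B * c < γ := by rwa [div_lt_one hγ] at hA
      have h3 : |(s i).2| = 1 := by rcases (hsG i).2 with h | h <;> rw [h] <;> simp
      calc _ ≤ |(s i).2 * reluNet d W (s i).1 L ⟨0, hpos⟩| := le_abs_self _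
        _ = |reluNet d W (s i).1 L ⟨0, hpos⟩| := by rw [abs_mul, h3, one_mul]
        _ < γ := by linarith
    have h1 : (1 / (m : ℝ)) * ∑ i : Fin m,
        (if (s i).2 * reluNet d W (s i).1 L ⟨0, hpos⟩ < γ then (1 : ℝ) else 0) = 1 := by
      rw [Finset.sum_congr rfl fun i _ => if_pos (hall i)]
      simp only [Finset.sum_const, Finset.card_univ, Fintype.card_fin, nsmul_eq_mul, mul_one]
      field_simp
    rw [h1]
    exact measureReal_le_one.trans (le_add_of_nonneg_right (Real.sqrt_nonneg _))
  set A := B * c / γ with hAdef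
  have hc : 0 < c := by
    refine lt_of_le_of_ne hc0 fun h => ?_
    rw [hAdef, ← h, mul_zero, zero_div] at hA
    linarith
  obtain ⟨U, hU1, hUf, hUS⟩ := exists_normalized W hc
  set S := ∑ l ∈ Finset.range L, ∑ i, ∑ j, U l i j ^ 2 with hSdef
  have hS1 : 1 ≤ S := by
    have h1 : (L : ℝ) ≤ S := by
      calc (L : ℝ) = ∑ _l ∈ Finset.range L, (1 : ℝ) := by simp
        _ ≤ S := Finset.sum_le_sum fun l hl => by
          have := specNorm_sq_le (U l)
          rwa [hU1 l (Finset.mem_range.1 hl), one_pow] at this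
    have h2 : (1 : ℝ) ≤ L := by exact_mod_cast hL
    linarith
  have hspec : (B * spectralComplexity L d W / γ) ^ 2 = A ^ 2 * S := by
    rw [spectralComplexity, ← hUS, ← hcdef, hAdef]
    calc (B * (c * Real.sqrt S) / γ) ^ 2 = (B * c / γ) ^ 2 * Real.sqrt S ^ 2 := by ring
      _ = _ := by rw [Real.sq_sqrt (by linarith)]
  -- rounding `4 A` up gives `A ≤ k / 4` while keeping `k ≤ 5 A`
  set k := ⌈4 * A⌉₊ with hkdef
  have hk4 : A ≤ (k : ℝ) / 4 := by
    have := Nat.le_ceil (4 * A); rw [← hkdef] at this; linarith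
  have hk5 : (k : ℝ) ≤ 5 * A := by
    have := Nat.ceil_lt_add_one (a := 4 * A) (by linarith); rw [← hkdef] at this; linarith
  have hk0 : 0 < k := Nat.ceil_pos.2 (by linarith)
  have ha1 : 1 ≤ (k : ℝ) / 4 := hA.trans hk4
  set a := (k : ℝ) / 4 with hadef
  have ha0 : 0 < a := by linarith
  have hr : 0 < 1 / (3 * a * L) := by positivity
  set R := (D {p : (Fin (d 0) → ℝ) × ℝ | p.2 * reluNet d W p.1 L ⟨0, hpos⟩ < 0}).toReal
  set Rm := (1 / (m : ℝ)) * ∑ i : Fin m,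
    (if (s i).2 * reluNet d W (s i).1 L ⟨0, hpos⟩ < γ then (1 : ℝ) else 0)
  rw [hspec]
  rcases le_or_gt (R - Rm) 0 with hg | hg
  · exact (sub_nonpos.1 hg).trans (le_add_of_nonneg_right (Real.sqrt_nonneg _))
  have hgap : ∀ V ∈ {V : (l : ℕ) → Fin (d (l + 1)) → Fin (d l) → ℝ |
      ∀ l < L, specNorm (Matrix.of (V l) - U l) ≤ 1 / (3 * a * L)},
      R - Rm ≤ gap D (Prod.mk V ⁻¹' thresholdEvent d L ⟨0, hpos⟩ (B / (2 * a))) s := by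
    intro V hV
    refine sub_le_gap D (G := G) hG s hsG (f := fun x => reluNet d W x L ⟨0, hpos⟩)
      (g := fun x => reluNet d (fun l => Matrix.of (V l)) x L ⟨0, hpos⟩)
      (h := fun x => reluNet d U x L ⟨0, hpos⟩) hc (fun x => ?_) (fun x hx => ?_) ?_
    · rw [hUf x]; rfl
    · exact abs_reluNet_sub_le hL _ U ha1 hU1 hV x hx _
    · have h1 : B * c ≤ a * γ := by rwa [hAdef, div_le_iff₀ hγ] at hk4
      have h2 : c * (2 * (B / (2 * a))) = B * c / a := by field_simp
      rw [h2, div_le_iff₀ ha0]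
      linarith
  have hv : ((Real.toNNReal ((1 / (3 * a * L)) ^ 2 / (24 * n)) : NNReal) : ℝ) =
      (1 / (3 * a * L)) ^ 2 / (24 * n) := Real.coe_toNNReal _ (by positivity)
  have hfin := hTs k s (hsT k) _ _ (R - Rm) (by positivity)
    (gaussPrior_ball hn1 hd hr hv U) hg.le hgap
  have hnum := numeric_bound hm hL hn1 hA hS1 hδ0 hk5 hk0
  rw [← sub_le_iff_le_add']
  refine Real.le_sqrt_of_sq_le ?_
  rw [le_div_iff₀ (by linarith), mul_comm]
  exact hfin.trans hnum
end
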